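/- arXiv:2104.04730 — 7 statements merged into one kernel-verified Lean document; each statement's English description precedes it below -/
import Mathlib

section
/- Under the frame setting, the measure φ_{E,W} is absolutely continuous with respect to ℒⁿ: for every Borel set B ⊂ ℝⁿ with ℒⁿ(B) = 0 one has ∫_E ℋ^m(B ∩ W(x)) dℒⁿ(x) = 0. -/
open MeasureTheory Metric Filter
open scoped ENNReal NNReal RealInnerProductSpace Topology

noncomputable section

abbrev En (n : ℕ) : Type := EuclideanSpace ℝ (Fin n)

def projCLM {n : ℕ} (W : Submodule ℝ (En n)) : En n →L[ℝ] En n :=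
  W.subtypeL.comp (Submodule.orthogonalProjectionOnto W)

def spanW {n m : ℕ} (w : Fin m → En n → En n) (x : En n) : Submodule ℝ (En n) :=
  Submodule.span ℝ (Set.range fun i => w i x)

def affW {n m : ℕ} (w : Fin m → En n → En n) (x : En n) : Set (En n) :=
  {y | y - x ∈ spanW w x}

def gMap {n k : ℕ} (v : Fin k → En n → En n) (u : En n) (x : En n) : En k :=
  (WithLp.equiv 2 (Fin k → ℝ)).symm fun i => ⟪v i x, x - u⟫

def unitBallVol (m : ℕ) : ℝ≥0∞ := volume (ball (0 : En m) 1)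

def phiEW (n m : ℕ) (E : Set (En n)) (w : Fin m → En n → En n) (B : Set (En n)) : ℝ≥0∞ :=
  ∫⁻ x in E, μH[(m : ℝ)] (B ∩ affW w x) ∂volume

def Y0W (n m : ℕ) (E : Set (En n)) (v : Fin (n - m) → En n → En n) (u : En n) : ℝ≥0∞ :=
  μH[(m : ℝ)] (E ∩ {x | gMap v u x = 0})

def YmW (n m : ℕ) (F : Set (En n)) (v : Fin (n - m) → En n → En n) (u : En n) : ℝ≥0∞ :=
  liminf (fun j : ℕ =>
    (∫⁻ y in closedBall (0 : En (n - m)) (1 / (j + 1)),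
        μH[(m : ℝ)] (F ∩ {x | gMap v u x = y}) ∂volume)
      / volume (closedBall (0 : En (n - m)) (1 / (j + 1)))) atTop

def polyball {n m : ℕ} (w : Fin m → En n → En n) (x₀ : En n) (r : ℝ) : Set (En n) :=
  {x | ‖projCLM (spanW w x₀) (x - x₀)‖ ≤ r ∧ ‖projCLM (spanW w x₀)ᗮ (x - x₀)‖ ≤ r}

/-! Extend the `w i` to Lipschitz maps on the whole space; by Rademacher they are differentiable
almost everywhere. Along a line `t = s • t₀`, the map `x ↦ x + ∑ i, t i • w i x` has derivative
`id + s • A` at `x`, which is singular for finitely many `s` only. By Fubini, for almost every `s`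
the derivative is invertible at almost every `x`, so the map pulls null sets back to null sets.
This holds on every line through the origin, hence for almost every `t` the set of `x` with
`x + ∑ i, t i • w i x ∈ B` is null. By Fubini again, for almost every `x` the set of such `t` is
null, and `ℋ^m(B ∩ W(x)) = 0` because `t ↦ x + ∑ i, t i • w i x` is a Lipschitz map onto `W(x)`. -/

theorem finite_setOf_det_id_add_smul_eq_zero {K V : Type*} [Field K] [AddCommGroup V] [Module K V]
    [FiniteDimensional K V] (A : V →ₗ[K] V) :
    {s : K | LinearMap.det (LinearMap.id + s • A) = 0}.Finite := by
  have finite_roots : {r : K | A.charpoly.IsRoot r}.Finite :=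
    Polynomial.finite_setOfPred_isRoot A.charpoly_monic.ne_zero
  have finite_inv_roots : {s : K | A.charpoly.IsRoot (-s⁻¹)}.Finite :=
    finite_roots.preimage (neg_injective.comp inv_injective).injOn
  refine (finite_inv_roots.insert 0).subset fun s hs => or_iff_not_imp_left.2 fun hs0 => ?_
  have factor : LinearMap.id + s • A = (-s) • (algebraMap K (Module.End K V) (-s⁻¹) - A) := by
    ext x
    simp [smul_sub, smul_smul, hs0]
  rw [Set.mem_ofPred_eq, factor, LinearMap.det_smul, ← LinearMap.eval_charpoly] at hs
  exact (mul_eq_zero.1 hs).resolve_left (pow_ne_zero _ (neg_ne_zero.2 hs0))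

section AddHaar

variable {X : Type*} [NormedAddCommGroup X] [NormedSpace ℝ X] [FiniteDimensional ℝ X]
  [MeasurableSpace X] [BorelSpace X] (μ : Measure X) [μ.IsAddHaarMeasure]

theorem exists_ne_zero_forall_approximatesLinearOn_addHaar_eq_zero {A : X →L[ℝ] X}
    (hA : A.det ≠ 0) :
    ∃ δ : ℝ≥0, δ ≠ 0 ∧ ∀ (s : Set X) (f : X → X),
      ApproximatesLinearOn f A s δ → μ (f '' s) = 0 → μ s = 0 := by
  obtain ⟨c, hc_pos, hc_lt⟩ : ∃ c : ℝ≥0, 0 < (c : ℝ≥0∞) ∧ (c : ℝ≥0∞) < ENNReal.ofReal |A.det| :=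
    ENNReal.lt_iff_exists_nnreal_btwn.1 (by simpa using hA)
  obtain ⟨δ, hδ, hδ_pos⟩ :=
    ((mul_le_addHaar_image_of_lt_det μ A hc_lt).and self_mem_nhdsWithin).exists
  refine ⟨δ, ne_of_gt hδ_pos, fun s f hf h_image => ?_⟩
  have mul_eq : (c : ℝ≥0∞) * μ s = 0 := nonpos_iff_eq_zero.1 (h_image ▸ hδ s f hf)
  exact (mul_eq_zero.1 mul_eq).resolve_left hc_pos.ne'

theorem addHaar_eq_zero_of_addHaar_image_eq_zero {f : X → X} {f' : X → X →L[ℝ] X} {s : Set X}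
    (hf : ∀ x ∈ s, HasFDerivWithinAt f (f' x) s x) (hdet : ∀ x ∈ s, (f' x).det ≠ 0)
    (h_image : μ (f '' s) = 0) : μ s = 0 := by
  rcases s.eq_empty_or_nonempty with rfl | hs
  · exact measure_empty
  have exists_radius (A : X →L[ℝ] X) : ∃ δ : ℝ≥0, δ ≠ 0 ∧ (A.det ≠ 0 → ∀ (t : Set X) (g : X → X),
      ApproximatesLinearOn g A t δ → μ (g '' t) = 0 → μ t = 0) := by
    by_cases hA : A.det = 0
    · exact ⟨1, one_ne_zero, fun h => absurd hA h⟩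
    · obtain ⟨δ, hδ, h⟩ := exists_ne_zero_forall_approximatesLinearOn_addHaar_eq_zero μ hA
      exact ⟨δ, hδ, fun _ => h⟩
  choose δ hδ null_of_approx using exists_radius
  obtain ⟨t, A, -, s_subset, approx, A_eq⟩ :=
    exists_closed_cover_approximatesLinearOn_of_hasFDerivWithinAt f s f' hf δ hδ
  have null_piece (k : ℕ) : μ (s ∩ t k) = 0 := by
    obtain ⟨y, hy, hAy⟩ := A_eq hs k
    exact null_of_approx (A k) (hAy ▸ hdet y hy) _ f (approx k)
      (measure_mono_null (Set.image_mono Set.inter_subset_left) h_image)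
  rw [← Set.inter_eq_left.2 s_subset, Set.inter_iUnion]
  exact measure_iUnion_null null_piece

theorem quasiMeasurePreserving_of_ae_det_fderiv_ne_zero {f : X → X} (hf : Measurable f)
    (hdiff : ∀ᵐ x ∂μ, DifferentiableAt ℝ f x) (hdet : ∀ᵐ x ∂μ, (fderiv ℝ f x).det ≠ 0) :
    Measure.QuasiMeasurePreserving f μ μ := by
  refine ⟨hf, Measure.AbsolutelyContinuous.mk fun B hB hB0 => ?_⟩
  rw [Measure.map_apply hf hB]
  let G : Set X := {x | DifferentiableAt ℝ f x ∧ (fderiv ℝ f x).det ≠ 0}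
  have null_inter : μ (f ⁻¹' B ∩ G) = 0 :=
    addHaar_eq_zero_of_addHaar_image_eq_zero μ
      (fun x hx => hx.2.1.hasFDerivAt.hasFDerivWithinAt) (fun x hx => hx.2.2)
      (measure_mono_null (by rintro _ ⟨x, hx, rfl⟩; exact hx.1) hB0)
  rwa [measure_inter_conull (hdiff.and hdet)] at null_inter

theorem ae_quasiMeasurePreserving_id_add_smul {T : X → X} (hT : Measurable T)
    (hdiff : ∀ᵐ x ∂μ, DifferentiableAt ℝ T x) :
    ∀ᵐ s : ℝ, Measure.QuasiMeasurePreserving (fun x => x + s • T x) μ μ := by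
  have measurableSet_det_ne_zero : MeasurableSet {q : X × ℝ |
      (ContinuousLinearMap.id ℝ X + q.2 • fderiv ℝ T q.1).det ≠ 0} :=
    (measurableSet_singleton 0).compl.preimage
      (ContinuousLinearMap.continuous_det.measurable.comp (by fun_prop))
  have det_ne_zero : ∀ᵐ s : ℝ, ∀ᵐ x ∂μ,
      (ContinuousLinearMap.id ℝ X + s • fderiv ℝ T x).det ≠ 0 :=
    (Measure.ae_ae_comm measurableSet_det_ne_zero).1 <|
      Eventually.of_forall fun x =>
        (finite_setOf_det_id_add_smul_eq_zero (fderiv ℝ T x : X →ₗ[ℝ] X)).countable.ae_notMem _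
  filter_upwards [det_ne_zero] with s hs
  have hasFDerivAt (x : X) (hx : DifferentiableAt ℝ T x) :
      HasFDerivAt (fun x => x + s • T x) (ContinuousLinearMap.id ℝ X + s • fderiv ℝ T x) x :=
    (hasFDerivAt_id x).add (hx.hasFDerivAt.const_smul s)
  refine quasiMeasurePreserving_of_ae_det_fderiv_ne_zero μ (by fun_prop) ?_ ?_
  · filter_upwards [hdiff] with x hx using (hasFDerivAt x hx).differentiableAt
  · filter_upwards [hdiff, hs] with x hx hx' using (hasFDerivAt x hx).fderiv ▸ hx'

theorem ae_of_forall_ae_smul {p : X → Prop} (hp : MeasurableSet {x | p x})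
    (h : ∀ x, ∀ᵐ s : ℝ, p (s • x)) : ∀ᵐ x ∂μ, p x := by
  have measurableSet_smul : MeasurableSet {q : X × ℝ | p (q.2 • q.1)} :=
    hp.preimage (measurable_snd.smul measurable_fst)
  have ae_ae_smul : ∀ᵐ s : ℝ, ∀ᵐ x ∂μ, p (s • x) :=
    (Measure.ae_ae_comm measurableSet_smul).1 (Eventually.of_forall h)
  obtain ⟨s, hs, hs0⟩ := (ae_ae_smul.and ((Set.countable_singleton 0).ae_notMem volume)).exists
  rw [Set.mem_singleton_iff] at hs0
  have null_preimage : μ ((s • ·) ⁻¹' {x | ¬p x}) = 0 := hs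
  rw [Measure.addHaar_preimage_smul μ hs0] at null_preimage
  exact (mul_eq_zero.1 null_preimage).resolve_left (by simp [hs0])

theorem ae_ae_add_sum_smul_notMem {ι : Type*} [Fintype ι] {w : ι → X → X}
    (hw : ∀ i, Measurable (w i)) (hdiff : ∀ i, ∀ᵐ x ∂μ, DifferentiableAt ℝ (w i) x)
    {B : Set X} (hB0 : μ B = 0) :
    ∀ᵐ x ∂μ, ∀ᵐ t : ι → ℝ, x + ∑ i, t i • w i x ∉ B := by
  wlog hB : MeasurableSet B generalizing B
  · filter_upwards [this ((measure_toMeasurable B).trans hB0) (measurableSet_toMeasurable μ B)]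
      with x hx
    filter_upwards [hx] with t ht using fun h => ht (subset_toMeasurable μ B h)
  have measurableSet_notMem :
      MeasurableSet {q : (ι → ℝ) × X | q.2 + ∑ i, q.1 i • w i q.2 ∉ B} :=
    hB.compl.preimage (by fun_prop)
  refine (Measure.ae_ae_comm measurableSet_notMem).1 ?_
  refine ae_of_forall_ae_smul volume
    (measurable_measure_prodMk_left measurableSet_notMem.compl (measurableSet_singleton 0))
    fun t => ?_
  have ae_diff : ∀ᵐ x ∂μ, DifferentiableAt ℝ (fun x => ∑ i, t i • w i x) x := by
    filter_upwards [ae_all_iff.2 hdiff] with x hx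
    exact DifferentiableAt.fun_sum fun i _ => (hx i).const_smul (t i)
  filter_upwards [ae_quasiMeasurePreserving_id_add_smul μ (by fun_prop) ae_diff] with s hs
  simpa only [Finset.smul_sum, smul_smul, Pi.smul_apply, smul_eq_mul] using
    hs.ae (measure_eq_zero_iff_ae_notMem.1 hB0)

end AddHaar

theorem hausdorffMeasure_inter_mk'_span_eq_zero {X : Type*} [NormedAddCommGroup X]
    [NormedSpace ℝ X] [MeasurableSpace X] [BorelSpace X] {ι : Type*} [Fintype ι]
    (x : X) (u : ι → X) {B : Set X} (hB : ∀ᵐ t : ι → ℝ, x + ∑ i, t i • u i ∉ B) :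
    μH[Fintype.card ι] (B ∩ AffineSubspace.mk' x (Submodule.span ℝ (Set.range u))) = 0 := by
  obtain ⟨K, lipschitz⟩ : ∃ K, LipschitzWith K fun t : ι → ℝ => x + ∑ i, t i • u i := by
    have lipschitz_sum := (Fintype.linearCombination ℝ u).toContinuousLinearMap.lipschitz
    exact ⟨_, (LipschitzWith.const x).add lipschitz_sum⟩
  have subset_image : B ∩ AffineSubspace.mk' x (Submodule.span ℝ (Set.range u)) ⊆
      (fun t : ι → ℝ => x + ∑ i, t i • u i) '' {t | x + ∑ i, t i • u i ∈ B} := by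
    rintro y ⟨hyB, hy⟩
    obtain ⟨t, ht⟩ := (Submodule.mem_span_range_iff_exists_fun ℝ).1 hy
    have y_eq : x + ∑ i, t i • u i = y := by rw [ht, vsub_eq_sub, add_sub_cancel]
    exact ⟨t, Set.mem_ofPred.2 (y_eq.symm ▸ hyB), y_eq⟩
  have null_params : μH[Fintype.card ι] {t : ι → ℝ | x + ∑ i, t i • u i ∈ B} = 0 := by
    rwa [hausdorffMeasure_pi_real, measure_eq_zero_iff_ae_notMem]
  refine measure_mono_null subset_image (nonpos_iff_eq_zero.1 ?_)
  exact (lipschitz.hausdorffMeasure_image_le (Nat.cast_nonneg _) _).trans_eq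
    (by rw [null_params, mul_zero])

theorem absolutelyContinuous_phiEW_general {X : Type*} [NormedAddCommGroup X] [NormedSpace ℝ X]
    [FiniteDimensional ℝ X] [MeasurableSpace X] [BorelSpace X] (μ : Measure X)
    [μ.IsAddHaarMeasure] {ι : Type*} [Fintype ι] {E : Set X} (hE : MeasurableSet E)
    {K : ι → ℝ≥0} {w : ι → X → X} (hw : ∀ i, LipschitzOnWith (K i) (w i) E)
    {B : Set X} (hB0 : μ B = 0) :
    ∫⁻ x in E, μH[Fintype.card ι]
      (B ∩ AffineSubspace.mk' x (Submodule.span ℝ (Set.range fun i => w i x))) ∂μ = 0 := by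
  choose w' hw' w_eq using fun i => (hw i).extend_finite_dimension
  refine lintegral_eq_zero_of_ae_eq_zero ?_
  filter_upwards [ae_restrict_mem hE, ae_restrict_of_ae (ae_ae_add_sum_smul_notMem μ
    (fun i => (hw' i).continuous.measurable) (fun i => (hw' i).ae_differentiableAt) hB0)]
    with x hxE hx
  have frame_eq : (fun i => w i x) = fun i => w' i x := funext fun i => w_eq i hxE
  rw [frame_eq]
  exact hausdorffMeasure_inter_mk'_span_eq_zero x _ hx

/-- In the frame setting, the measure `φ_{E,W}` is absolutely continuous
with respect to Lebesgue measure: `ℒⁿ(B) = 0` implies `∫_E ℋ^m(B ∩ W(x)) dℒⁿ(x) = 0`. -/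
theorem absolutelyContinuous_phiEW
    (n m : ℕ) (hm : 1 ≤ m) (hmn : m + 1 ≤ n)
    (E U : Set (En n)) (hE : MeasurableSet E) (hEvol : volume E < ⊤)
    (hU : IsOpen U) (hEU : E ⊆ U)
    (Λ : ℝ≥0) (hΛ : 0 < Λ)
    (w : Fin m → En n → En n) (v : Fin (n - m) → En n → En n)
    (hw : ∀ i, LipschitzOnWith Λ (w i) U)
    (hv : ∀ i, LipschitzOnWith Λ (v i) U)
    (horth : ∀ x ∈ U, Orthonormal ℝ (Sum.elim (fun i => w i x) (fun i => v i x)))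
    (hperp : ∀ x ∈ U, (spanW w x)ᗮ = Submodule.span ℝ (Set.range fun i => v i x))
    (B : Set (En n)) (hB : MeasurableSet B) (hB0 : volume B = 0) :
    phiEW n m E w B = 0 := by
  have general := absolutelyContinuous_phiEW_general volume hE (fun i => (hw i).mono hEU) hB0
  rwa [Fintype.card_fin] at general
end
end

section
/- Given 0 < ε < 1/3, there exists δ > 0, depending only on n, Λ, ε, with the following property. In the frame setting, if 0 < r < δ, x₀ ∈ U, u ∈ C_W(x₀,r) ⊂ U, |g_u(x₀)| ≤ (1−3ε)·r, and C ⊂ C_{εr} is a closed subset of ℝ^{n−m}, then ℒⁿ(C_W(x₀,r) ∩ g_u^{-1}(C)) ≥ (1/(1+ε)) · α(m) · r^m · ℒ^{n−m}(C). -/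
open MeasureTheory Metric Filter
open scoped ENNReal NNReal RealInnerProductSpace Topology

noncomputable section

/-!
In the orthonormal coordinates `x = x₀ + ∑ sᵢ wᵢ(x₀) + ∑ tⱼ vⱼ(x₀)` the map `g_u` reads
`t ↦ t + g_u(x₀) + R`, where the remainder `R` collects the inner products
`⟨vⱼ(x) - vⱼ(x₀), x - u⟩`. On `C_W(x₀, r)` it is `O(Λr)`-Lipschitz and vanishes at `x₀`. Hence, for
each fixed `s` in the ball of radius `r` and all small `r`, Banach's fixed point theorem shows that
the image of the ball of radius `r` under `t ↦ g_u(x)` covers `C`. As this map has Lipschitz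
constant at most `1 + O(Λr)`, its preimage of `C` has measure at least
`(1 + O(Λr))^{-(n-m)} ℒ^{n-m}(C)`; integrating over `s` gives the bound.
-/

open Module

section Fubini

theorem measure_mul_le_prod_of_forall_le_slice {α β : Type*} [MeasurableSpace α]
    [MeasurableSpace β] {μ : Measure α} {ν : Measure β} [SFinite ν] {s : Set α}
    {t : Set (α × β)} {c : ℝ≥0∞} (h : ∀ a ∈ s, c ≤ ν (Prod.mk a ⁻¹' t)) :
    μ s * c ≤ μ.prod ν t := by
  set t' := toMeasurable (μ.prod ν) t with ht'
  have ht'_meas : MeasurableSet t' := measurableSet_toMeasurable _ _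
  have hs : s ⊆ {a | c ≤ ν (Prod.mk a ⁻¹' t')} := fun a ha =>
    (h a ha).trans (measure_mono (Set.preimage_mono (subset_toMeasurable _ _)))
  calc μ s * c ≤ c * μ {a | c ≤ ν (Prod.mk a ⁻¹' t')} := by rw [mul_comm]; gcongr
    _ ≤ ∫⁻ a, ν (Prod.mk a ⁻¹' t') ∂μ :=
        mul_meas_ge_le_lintegral (measurable_measure_prodMk_left ht'_meas) c
    _ = μ.prod ν t := by rw [← Measure.prod_apply ht'_meas, ht', measure_toMeasurable]

end Fubini

section PerturbationOfIdentity

theorem exists_mem_closedBall_add_eq {F : Type*} [NormedAddCommGroup F] [CompleteSpace F]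
    {η : ℝ≥0} {r : ℝ} {h : F → F} {y : F} (hη : η < 1) (hr : 0 ≤ r)
    (hh : LipschitzOnWith η h (closedBall 0 r)) (hy : ∀ t ∈ closedBall 0 r, ‖y - h t‖ ≤ r) :
    ∃ t ∈ closedBall 0 r, t + h t = y := by
  have hmaps : Set.MapsTo (fun t => y - h t) (closedBall 0 r) (closedBall 0 r) := fun t ht =>
    mem_closedBall_zero_iff.2 (hy t ht)
  have hcontr : ContractingWith η (hmaps.restrict (fun t => y - h t) _ _) := by
    refine ⟨hη, LipschitzWith.of_dist_le_mul fun a b => ?_⟩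
    simp only [Subtype.dist_eq, Set.MapsTo.val_restrict_apply, dist_sub_left]
    exact hh.dist_le_mul a a.2 b b.2
  obtain ⟨t, ht, hfix, -⟩ := hcontr.exists_fixedPoint' isClosed_closedBall.isComplete hmaps
    (mem_closedBall_self hr) (edist_ne_top _ _)
  exact ⟨t, ht, (sub_eq_iff_eq_add.1 hfix).symm⟩

variable {F : Type*} [NormedAddCommGroup F] [InnerProductSpace ℝ F] [FiniteDimensional ℝ F]
  [MeasurableSpace F] [BorelSpace F]

theorem volume_image_le_of_lipschitzOnWith {K : ℝ≥0} {f : F → F} {s : Set F}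
    (hf : LipschitzOnWith K f s) :
    volume (f '' s) ≤ (K : ℝ≥0∞) ^ finrank ℝ F * volume s := by
  have hH := hf.hausdorffMeasure_image_le (d := finrank ℝ F) (Nat.cast_nonneg _)
  rw [ENNReal.rpow_natCast] at hH
  rw [← InnerProductSpace.euclideanHausdorffMeasure_eq_volume,
    Measure.euclideanHausdorffMeasure_def, Measure.smul_apply, Measure.smul_apply,
    ENNReal.smul_def, smul_eq_mul, ENNReal.smul_def, smul_eq_mul, mul_left_comm]
  gcongr

theorem volume_le_pow_mul_volume_add_mem {η : ℝ≥0} {r : ℝ} {h : F → F} {C : Set F}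
    (hη : η < 1) (hr : 0 ≤ r) (hh : LipschitzOnWith η h (closedBall 0 r))
    (hC : ∀ y ∈ C, ∀ t ∈ closedBall 0 r, ‖y - h t‖ ≤ r) :
    volume C ≤ ((1 + η : ℝ≥0) : ℝ≥0∞) ^ finrank ℝ F *
      volume (closedBall 0 r ∩ {t | t + h t ∈ C}) := by
  have hlip : LipschitzOnWith (1 + η) (fun t => t + h t) (closedBall 0 r) :=
    LipschitzWith.id.lipschitzOnWith.add hh
  have hsurj : C ⊆ (fun t => t + h t) '' (closedBall 0 r ∩ {t | t + h t ∈ C}) := fun y hy => by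
    obtain ⟨t, ht, rfl⟩ := exists_mem_closedBall_add_eq hη hr hh (hC y hy)
    exact ⟨t, ⟨ht, hy⟩, rfl⟩
  exact (measure_mono hsurj).trans
    (volume_image_le_of_lipschitzOnWith (hlip.mono Set.inter_subset_left))

end PerturbationOfIdentity

section OrthogonalIsometries

variable {V F E : Type*}
  [NormedAddCommGroup V] [InnerProductSpace ℝ V] [FiniteDimensional ℝ V]
  [MeasurableSpace V] [BorelSpace V]
  [NormedAddCommGroup F] [InnerProductSpace ℝ F] [FiniteDimensional ℝ F]
  [MeasurableSpace F] [BorelSpace F]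
  [NormedAddCommGroup E] [InnerProductSpace ℝ E] [FiniteDimensional ℝ E]
  [MeasurableSpace E] [BorelSpace E]
  {f : V →ₗᵢ[ℝ] E} {g : F →ₗᵢ[ℝ] E}

theorem measurePreserving_linearIsometry_add (horth : ∀ s t, ⟪f s, g t⟫ = 0)
    (hdim : finrank ℝ V + finrank ℝ F = finrank ℝ E) :
    MeasurePreserving (fun p : V × F => f p.1 + g p.2) := by
  let φ : WithLp 2 (V × F) →ₗᵢ[ℝ] E :=
    ((f.toLinearMap.coprod g.toLinearMap) ∘ₗ
      (WithLp.linearEquiv 2 ℝ (V × F)).toLinearMap).isometryOfInner fun p q => by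
        have horth' : ∀ t s, ⟪g t, f s⟫ = 0 := fun t s => by rw [real_inner_comm, horth]
        simp [inner_add_left, inner_add_right, horth, horth', f.inner_map_map, g.inner_map_map]
  have hfinrank : finrank ℝ (WithLp 2 (V × F)) = finrank ℝ E := by
    rw [(WithLp.linearEquiv 2 ℝ (V × F)).finrank_eq, finrank_prod, hdim]
  exact (φ.toLinearIsometryEquiv hfinrank).measurePreserving.comp
    (WithLp.volume_preserving_toLp V F)

theorem volume_closedBall_mul_le_pow_mul_volume_inter {η : ℝ≥0} {r : ℝ} {x₀ : E} {Q : Set E}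
    {R G : E → F} {C : Set F} (horth : ∀ s t, ⟪f s, g t⟫ = 0)
    (hdim : finrank ℝ V + finrank ℝ F = finrank ℝ E) (hr : 0 ≤ r)
    (hQ : ∀ s ∈ closedBall 0 r, ∀ t ∈ closedBall 0 r, x₀ + (f s + g t) ∈ Q)
    (hη : η < 1) (hR : LipschitzOnWith η R Q) (hC : ∀ y ∈ C, ∀ x ∈ Q, ‖y - R x‖ ≤ r)
    (hG : ∀ s t, G (x₀ + (f s + g t)) = t + R (x₀ + (f s + g t))) :
    volume (closedBall (0 : V) r) * volume C ≤
      ((1 + η : ℝ≥0) : ℝ≥0∞) ^ finrank ℝ F * volume (Q ∩ {x | G x ∈ C}) := by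
  set K : ℝ≥0∞ := ((1 + η : ℝ≥0) : ℝ≥0∞) ^ finrank ℝ F
  have hK0 : K ≠ 0 := by positivity
  have hKtop : K ≠ ⊤ := by finiteness
  let Ψ : V × F → E := fun p => x₀ + (f p.1 + g p.2)
  have hΨ : MeasurePreserving Ψ (volume.prod volume) volume :=
    (measurePreserving_add_left volume x₀).comp (measurePreserving_linearIsometry_add horth hdim)
  have hslice : ∀ s ∈ closedBall (0 : V) r,
      K⁻¹ * volume C ≤ volume (Prod.mk s ⁻¹' (Ψ ⁻¹' (Q ∩ {x | G x ∈ C}))) := by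
    intro s hs
    have hlip : LipschitzOnWith η (fun t => R (x₀ + (f s + g t))) (closedBall 0 r) := by
      have hiso : LipschitzWith 1 fun t => x₀ + (f s + g t) :=
        LipschitzWith.of_dist_le_mul fun t t' => by simp [g.dist_map]
      simpa [Function.comp_def] using hR.comp hiso.lipschitzOnWith (hQ s hs)
    rw [ENNReal.inv_mul_le_iff hK0 hKtop]
    refine (volume_le_pow_mul_volume_add_mem hη hr hlip
      fun y hy t ht => hC y hy _ (hQ s hs t ht)).trans ?_
    gcongr
    exact fun t ht => ⟨hQ s hs t ht.1, (congrArg (· ∈ C) (hG s t)).mpr ht.2⟩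
  rw [← ENNReal.inv_mul_le_iff hK0 hKtop, mul_left_comm]
  exact (measure_mul_le_prod_of_forall_le_slice hslice).trans (hΨ.measure_preimage_le _)

end OrthogonalIsometries

section FrameIsometry

theorem isOrtho_span_of_orthonormal_sumElim {ι κ E : Type*} [NormedAddCommGroup E]
    [InnerProductSpace ℝ E] {a : ι → E} {b : κ → E} (hab : Orthonormal ℝ (Sum.elim a b)) :
    Submodule.span ℝ (Set.range a) ⟂ Submodule.span ℝ (Set.range b) := by
  rw [Submodule.isOrtho_span]
  rintro _ ⟨i, rfl⟩ _ ⟨j, rfl⟩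
  exact hab.inner_eq_zero (i := Sum.inl i) (j := Sum.inr j) Sum.inl_ne_inr

variable {ι E : Type*} [Fintype ι] [NormedAddCommGroup E] [InnerProductSpace ℝ E] {a : ι → E}

/-- The isometric embedding `s ↦ ∑ i, s i • a i` of coordinate space determined by an orthonormal
family `a`; it parametrizes the span of `a`. -/
def frameIsometry (ha : Orthonormal ℝ a) : EuclideanSpace ℝ ι →ₗᵢ[ℝ] E :=
  (Fintype.linearCombination ℝ a ∘ₗ (WithLp.linearEquiv 2 ℝ (ι → ℝ)).toLinearMap).isometryOfInner
    fun s t => by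
      simp [Fintype.linearCombination_apply, ha.inner_sum, PiLp.inner_apply, mul_comm]

theorem frameIsometry_mem_span (ha : Orthonormal ℝ a) (s : EuclideanSpace ℝ ι) :
    frameIsometry ha s ∈ Submodule.span ℝ (Set.range a) :=
  Fintype.range_linearCombination ℝ a ▸ LinearMap.mem_range_self _ s.ofLp

theorem inner_frameIsometry (ha : Orthonormal ℝ a) (i : ι) (s : EuclideanSpace ℝ ι) :
    ⟪a i, frameIsometry ha s⟫ = s i := by
  exact ha.inner_right_fintype s.ofLp i

end FrameIsometry

section Polyball

variable {n m : ℕ} {w : Fin m → En n → En n} {x₀ : En n} {r : ℝ}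

theorem projCLM_apply (W : Submodule ℝ (En n)) (x : En n) :
    projCLM W x = W.starProjection x := rfl

theorem nonneg_of_mem_polyball {x : En n} (hx : x ∈ polyball w x₀ r) : 0 ≤ r :=
  (norm_nonneg _).trans hx.1

theorem center_mem_polyball (hr : 0 ≤ r) : x₀ ∈ polyball w x₀ r := by
  simp [polyball, hr]

theorem norm_sub_le_of_mem_polyball {x : En n} (hx : x ∈ polyball w x₀ r) :
    ‖x - x₀‖ ≤ 2 * r := by
  have hdecomp : projCLM (spanW w x₀) (x - x₀) + projCLM (spanW w x₀)ᗮ (x - x₀) = x - x₀ := by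
    simp only [projCLM_apply, Submodule.starProjection_add_starProjection_orthogonal]
  obtain ⟨htangent, hnormal⟩ := hx
  rw [← hdecomp, two_mul]
  exact norm_add_le_of_le htangent hnormal

theorem norm_sub_le_of_mem_polyball_of_mem_polyball {x y : En n} (hx : x ∈ polyball w x₀ r)
    (hy : y ∈ polyball w x₀ r) : ‖x - y‖ ≤ 4 * r := by
  have htri := norm_sub_le_norm_sub_add_norm_sub x x₀ y
  rw [norm_sub_rev x₀ y] at htri
  linarith [norm_sub_le_of_mem_polyball hx, norm_sub_le_of_mem_polyball hy]

theorem add_mem_polyball {y z : En n} (hy : y ∈ spanW w x₀) (hz : z ∈ (spanW w x₀)ᗮ)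
    (hyr : ‖y‖ ≤ r) (hzr : ‖z‖ ≤ r) : x₀ + (y + z) ∈ polyball w x₀ r := by
  have hproj : projCLM (spanW w x₀) (y + z) = y := by
    rw [projCLM_apply, map_add, Submodule.starProjection_eq_self_iff.2 hy,
      (Submodule.starProjection_apply_eq_zero_iff _).2 hz, add_zero]
  have hproj_orth : projCLM (spanW w x₀)ᗮ (y + z) = z := by
    rw [projCLM_apply, Submodule.starProjection_orthogonal_val, ← projCLM_apply, hproj,
      add_sub_cancel_left]
  constructor
  · rwa [add_sub_cancel_left, hproj]
  · rwa [add_sub_cancel_left, hproj_orth]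

end Polyball

section GMap

variable {n k : ℕ} {v : Fin k → En n → En n} {u : En n}

theorem gMap_apply (x : En n) (i : Fin k) : gMap v u x i = ⟪v i x, x - u⟫ := rfl

theorem lipschitzOnWith_gMap {S : Set (En n)} {L a b : ℝ≥0}
    (hv : ∀ i, LipschitzOnWith L (v i) S) (ha : ∀ i, ∀ x ∈ S, ‖v i x‖ ≤ a)
    (hb : ∀ x ∈ S, ‖x - u‖ ≤ b) :
    LipschitzOnWith (NNReal.sqrt k * (L * b + a)) (gMap v u) S := by
  have hcoord : ∀ i, LipschitzOnWith (L * b + a) (fun x => ⟪v i x, x - u⟫) S := by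
    refine fun i => LipschitzOnWith.of_dist_le_mul fun x hx y hy => ?_
    rw [Real.dist_eq, dist_eq_norm]
    calc |⟪v i x, x - u⟫ - ⟪v i y, y - u⟫|
        = |⟪v i x - v i y, x - u⟫ + ⟪v i y, x - y⟫| := by
          simp only [inner_sub_left, inner_sub_right]; ring_nf
      _ ≤ ‖v i x - v i y‖ * ‖x - u‖ + ‖v i y‖ * ‖x - y‖ :=
          (abs_add_le _ _).trans
            (add_le_add (abs_real_inner_le_norm _ _) (abs_real_inner_le_norm _ _))
      _ ≤ (L * ‖x - y‖) * b + a * ‖x - y‖ := by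
          gcongr
          exacts [(hv i).norm_sub_le hx hy, hb x hx, ha i y hy]
      _ = ((L * b + a : ℝ≥0) : ℝ) * ‖x - y‖ := by push_cast; ring
  have hpi : LipschitzOnWith (L * b + a) (fun x i => ⟪v i x, x - u⟫) S := fun x hx y hy =>
    edist_pi_le_iff.2 fun i => hcoord i hx hy
  have hsqrt : NNReal.sqrt k = (Fintype.card (Fin k) : ℝ≥0) ^ (1 / (2 : ℝ≥0∞)).toReal := by
    simp [NNReal.sqrt_eq_rpow]
  rw [hsqrt]
  exact (PiLp.lipschitzWith_toLp 2 fun _ : Fin k => ℝ).comp_lipschitzOnWith hpi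

/-- The deviation of `gMap v u` from the affine map obtained by freezing the frame `v` at `x₀`,
that is, from `x ↦ (⟪v i x₀, x - u⟫)ᵢ`. -/
def gMapRemainder (v : Fin k → En n → En n) (x₀ u : En n) : En n → En k :=
  gMap (fun i z => v i z - v i x₀) u

theorem gMapRemainder_apply (x₀ x : En n) (i : Fin k) :
    gMapRemainder v x₀ u x i = ⟪v i x - v i x₀, x - u⟫ := rfl

theorem gMapRemainder_self (x₀ : En n) : gMapRemainder v x₀ u x₀ = 0 := by
  ext i
  simp [gMapRemainder_apply]

theorem gMap_add_frameIsometry {x₀ y : En n} (hv : Orthonormal ℝ fun i => v i x₀)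
    (hy : ∀ i, ⟪v i x₀, y⟫ = 0) (t : En k) :
    gMap v u (x₀ + (y + frameIsometry hv t)) = t + (gMap v u x₀ +
      gMapRemainder v x₀ u (x₀ + (y + frameIsometry hv t))) := by
  ext i
  have hsplit : ⟪v i x₀, x₀ + (y + frameIsometry hv t) - u⟫ = t i + ⟪v i x₀, x₀ - u⟫ := by
    rw [add_sub_right_comm, inner_add_right, inner_add_right, hy,
      inner_frameIsometry hv, zero_add, add_comm]
  simp only [PiLp.add_apply, gMap_apply, gMapRemainder_apply, inner_sub_left, hsplit]
  ring

end GMap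

section Stripe

variable {n m k : ℕ} {w : Fin m → En n → En n} {v : Fin k → En n → En n} {x₀ u : En n}

theorem lipschitzOnWith_gMapRemainder {Λ r : ℝ≥0}
    (hv : ∀ i, LipschitzOnWith Λ (v i) (polyball w x₀ r)) (hu : u ∈ polyball w x₀ r) :
    LipschitzOnWith (NNReal.sqrt k * (6 * Λ) * r) (gMapRemainder v x₀ u)
      (polyball w x₀ r) := by
  have hx₀ : x₀ ∈ polyball w x₀ r := center_mem_polyball r.coe_nonneg
  have hlip : ∀ i, LipschitzOnWith Λ (fun z => v i z - v i x₀) (polyball w x₀ r) := fun i =>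
    LipschitzOnWith.of_dist_le_mul fun x hx y hy => by
      simpa only [dist_sub_right] using (hv i).dist_le_mul x hx y hy
  have hbound : ∀ i, ∀ x ∈ polyball w x₀ r, ‖v i x - v i x₀‖ ≤ (Λ * (2 * r) : ℝ≥0) :=
    fun i x hx => by
      push_cast
      exact (hv i).norm_sub_le_of_le hx hx₀ (norm_sub_le_of_mem_polyball hx)
  have hradius : ∀ x ∈ polyball w x₀ r, ‖x - u‖ ≤ (4 * r : ℝ≥0) := fun x hx =>
    norm_sub_le_of_mem_polyball_of_mem_polyball hx hu
  have hconst : NNReal.sqrt k * (6 * Λ) * r = NNReal.sqrt k * (Λ * (4 * r) + Λ * (2 * r)) := by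
    ring
  rw [hconst]
  exact lipschitzOnWith_gMap hlip hbound hradius

theorem norm_gMapRemainder_le {η r : ℝ≥0} {x : En n}
    (hη : LipschitzOnWith η (gMapRemainder v x₀ u) (polyball w x₀ r))
    (hx : x ∈ polyball w x₀ r) : ‖gMapRemainder v x₀ u x‖ ≤ η * (2 * r) := by
  simpa [gMapRemainder_self] using hη.norm_sub_le_of_le hx
    (center_mem_polyball r.coe_nonneg) (norm_sub_le_of_mem_polyball hx)

-- The radius budget is `ε r + (1 - 3 ε) r + 2 ε r = r`.
theorem norm_sub_gMap_add_gMapRemainder_le {η r : ℝ≥0} {ε : ℝ} {x : En n} {y : En k}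
    (hηε : η ≤ ε) (hη : LipschitzOnWith η (gMapRemainder v x₀ u) (polyball w x₀ r))
    (hg : ‖gMap v u x₀‖ ≤ (1 - 3 * ε) * r) (hy : ‖y‖ ≤ ε * r) (hx : x ∈ polyball w x₀ r) :
    ‖y - (gMap v u x₀ + gMapRemainder v x₀ u x)‖ ≤ r := by
  have hrem : ‖gMapRemainder v x₀ u x‖ ≤ ε * (2 * r) :=
    (norm_gMapRemainder_le hη hx).trans (by gcongr)
  linarith [norm_sub_le y (gMap v u x₀ + gMapRemainder v x₀ u x),
    norm_add_le (gMap v u x₀) (gMapRemainder v x₀ u x)]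

theorem volume_closedBall_mul_le_pow_mul_volume_stripe {η r : ℝ≥0} {ε : ℝ} {C : Set (En k)}
    (hdim : m + k = n) (hη1 : η < 1) (hηε : η ≤ ε)
    (horth : Orthonormal ℝ (Sum.elim (fun i => w i x₀) (fun i => v i x₀)))
    (hη : LipschitzOnWith η (gMapRemainder v x₀ u) (polyball w x₀ r))
    (hg : ‖gMap v u x₀‖ ≤ (1 - 3 * ε) * r) (hC : C ⊆ closedBall 0 (ε * r)) :
    volume (closedBall (0 : En m) r) * volume C ≤
      ((1 + η : ℝ≥0) : ℝ≥0∞) ^ k * volume (polyball w x₀ r ∩ {x | gMap v u x ∈ C}) := by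
  have hw : Orthonormal ℝ fun i => w i x₀ := horth.comp Sum.inl Sum.inl_injective
  have hv : Orthonormal ℝ fun i => v i x₀ := horth.comp Sum.inr Sum.inr_injective
  have hspan := isOrtho_span_of_orthonormal_sumElim horth
  let f := frameIsometry hw
  let g := frameIsometry hv
  let R : En n → En k := fun x => gMap v u x₀ + gMapRemainder v x₀ u x
  have hperp : ∀ s t, ⟪f s, g t⟫ = 0 := fun s t =>
    hspan.inner_eq (frameIsometry_mem_span hw s) (frameIsometry_mem_span hv t)
  have hchart : ∀ s ∈ closedBall 0 (r : ℝ), ∀ t ∈ closedBall 0 (r : ℝ),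
      x₀ + (f s + g t) ∈ polyball w x₀ r := fun s hs t ht =>
    add_mem_polyball (frameIsometry_mem_span hw s) (hspan.symm (frameIsometry_mem_span hv t))
      (by simpa [f] using hs) (by simpa [g] using ht)
  have hlip : LipschitzOnWith η R (polyball w x₀ r) :=
    LipschitzOnWith.of_dist_le_mul fun x hx y hy => by
      simpa only [R, dist_add_left] using hη.dist_le_mul x hx y hy
  have hshift : ∀ y ∈ C, ∀ x ∈ polyball w x₀ r, ‖y - R x‖ ≤ r := fun y hy x hx =>
    norm_sub_gMap_add_gMapRemainder_le hηε hη hg (mem_closedBall_zero_iff.1 (hC hy)) hx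
  have hsplit : ∀ s t, gMap v u (x₀ + (f s + g t)) = t + R (x₀ + (f s + g t)) := fun s t =>
    gMap_add_frameIsometry hv (fun i =>
      hspan.symm.inner_eq (Submodule.subset_span ⟨i, rfl⟩) (frameIsometry_mem_span hw s)) t
  simpa using volume_closedBall_mul_le_pow_mul_volume_inter hperp (by simpa) r.coe_nonneg
    hchart hη1 hlip hshift hsplit

theorem volume_closedBall_eq_unitBallVol_mul {r : ℝ} (hr : 0 ≤ r) (x : En m) :
    volume (closedBall x r) = unitBallVol m * ENNReal.ofReal (r ^ m) := by
  rw [Measure.addHaar_closedBall _ _ hr, unitBallVol, mul_comm, finrank_euclideanSpace_fin]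

theorem exists_pos_forall_lt_mul_small (n : ℕ) (L : ℝ≥0) {ε : ℝ} (hε : 0 < ε) :
    ∃ δ : ℝ, 0 < δ ∧ ∀ r : ℝ≥0, r < δ →
      L * r < 1 ∧ ((L * r : ℝ≥0) : ℝ) ≤ ε ∧ (1 + ((L * r : ℝ≥0) : ℝ)) ^ n ≤ 1 + ε := by
  have hlim : Tendsto (fun r : ℝ => (L : ℝ) * r) (𝓝 0) (𝓝 0) :=
    Continuous.tendsto' (by fun_prop) _ _ (mul_zero _)
  have hpow : Tendsto (fun r : ℝ => (1 + (L : ℝ) * r) ^ n) (𝓝 0) (𝓝 1) :=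
    Continuous.tendsto' (by fun_prop) _ _ (by simp)
  obtain ⟨δ, hδ, h⟩ := Metric.eventually_nhds_iff.1 <|
    (hlim.eventually_lt_const one_pos).and <| (hlim.eventually_le_const hε).and <|
      hpow.eventually_le_const (lt_add_of_pos_right 1 hε)
  refine ⟨δ, hδ, fun r hr => ?_⟩
  exact_mod_cast h (y := r) (by simpa using hr)

theorem stripe_volume_lower_bound_general (n : ℕ) (Λ : ℝ≥0) {ε : ℝ} (hε : 0 < ε) :
    ∃ δ : ℝ, 0 < δ ∧
      ∀ (m k : ℕ), m + k = n →
      ∀ (w : Fin m → En n → En n) (v : Fin k → En n → En n) (r : ℝ) (x₀ u : En n)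
        (C : Set (En k)),
          r < δ →
          (∀ i, LipschitzOnWith Λ (v i) (polyball w x₀ r)) →
          Orthonormal ℝ (Sum.elim (fun i => w i x₀) (fun i => v i x₀)) →
          u ∈ polyball w x₀ r →
          ‖gMap v u x₀‖ ≤ (1 - 3 * ε) * r →
          C ⊆ closedBall (0 : En k) (ε * r) →
          ENNReal.ofReal (1 / (1 + ε)) * (unitBallVol m * ENNReal.ofReal (r ^ m) * volume C)
            ≤ volume (polyball w x₀ r ∩ {x | gMap v u x ∈ C}) := by
  obtain ⟨δ, hδ, hsmall⟩ := exists_pos_forall_lt_mul_small n (NNReal.sqrt n * (6 * Λ)) hε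
  refine ⟨δ, hδ, fun m k hdim w v r x₀ u C hrδ hv horth hu hg hC => ?_⟩
  lift r to ℝ≥0 using nonneg_of_mem_polyball hu
  obtain ⟨hη1, hηε, hηpow⟩ := hsmall r hrδ
  set η : ℝ≥0 := NNReal.sqrt n * (6 * Λ) * r with hη_def
  have hkn : k ≤ n := hdim ▸ Nat.le_add_left k m
  have hη : LipschitzOnWith η (gMapRemainder v x₀ u) (polyball w x₀ r) :=
    (lipschitzOnWith_gMapRemainder hv hu).weaken (by rw [hη_def]; gcongr)
  have hfactor : ((1 + η : ℝ≥0) : ℝ≥0∞) ^ k ≤ ENNReal.ofReal (1 + ε) := by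
    rw [← ENNReal.coe_pow, ← ENNReal.ofReal_coe_nnreal]
    refine ENNReal.ofReal_le_ofReal (le_trans ?_ hηpow)
    push_cast
    exact pow_le_pow_right₀ (by simp) hkn
  have hε1 : 0 < 1 + ε := by positivity
  rw [← volume_closedBall_eq_unitBallVol_mul r.coe_nonneg 0, one_div, ENNReal.ofReal_inv_of_pos hε1,
    ENNReal.inv_mul_le_iff (by simpa using hε1) ENNReal.ofReal_ne_top]
  grw [← hfactor]
  exact volume_closedBall_mul_le_pow_mul_volume_stripe hdim hη1 hηε horth hη hg hC

end Stripe

/-- Lower volume bound for the "nonlinear stripe"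
`C_W(x₀,r) ∩ g_u^{-1}(C)`. -/
theorem stripe_volume_lower_bound
    (n : ℕ) (Λ : ℝ≥0) (hΛ : 0 < Λ) (ε : ℝ) (hε0 : 0 < ε) (hε1 : ε < 1 / 3) :
    ∃ δ : ℝ, 0 < δ ∧
      ∀ (m : ℕ), 1 ≤ m → m + 1 ≤ n →
      ∀ (E U : Set (En n)), MeasurableSet E → volume E < ⊤ → IsOpen U → E ⊆ U →
      ∀ (w : Fin m → En n → En n) (v : Fin (n - m) → En n → En n),
        (∀ i, LipschitzOnWith Λ (w i) U) →
        (∀ i, LipschitzOnWith Λ (v i) U) →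
        (∀ x ∈ U, Orthonormal ℝ (Sum.elim (fun i => w i x) (fun i => v i x))) →
        (∀ x ∈ U, (spanW w x)ᗮ = Submodule.span ℝ (Set.range fun i => v i x)) →
        ∀ (r : ℝ) (x₀ u : En n) (C : Set (En (n - m))),
          0 < r → r < δ →
          x₀ ∈ U → u ∈ polyball w x₀ r → polyball w x₀ r ⊆ U →
          ‖gMap v u x₀‖ ≤ (1 - 3 * ε) * r →
          IsClosed C → C ⊆ closedBall (0 : En (n - m)) (ε * r) →
          ENNReal.ofReal (1 / (1 + ε)) * (unitBallVol m * ENNReal.ofReal (r ^ m) * volume C)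
            ≤ volume (polyball w x₀ r ∩ {x | gMap v u x ∈ C}) := by
  obtain ⟨δ, hδ, h⟩ := stripe_volume_lower_bound_general n Λ hε0
  exact ⟨δ, hδ, fun m _ hmn _ _ _ _ _ _ w v _ hv horth _ r x₀ u C _ hrδ hx₀ hu hPU hg _ hC =>
    h m (n - m) (by lia) w v r x₀ u C hrδ (fun i => (hv i).mono hPU) (horth x₀ hx₀) hu hg hC⟩
end
end

section
/- There exists δ > 0, depending only on n and Λ, with the following property. In the frame setting, if diam E ≤ δ, then 𝒵_E W(u) > 0 for ℒⁿ-almost every u ∈ E. -/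
open MeasureTheory Metric Filter
open scoped ENNReal NNReal RealInnerProductSpace Topology

noncomputable section

/-!
If `𝒵_E W` vanished on a subset of `E` of positive measure, then that subset would contain a compact
`K` of positive measure with `φ_{E,W}(K) = 0`. Parametrize the planes by `t ↦ x + A x t`, where
`A x t = ∑ i, t i • w i x`. For small fixed `t` the map `x ↦ x + A x t` is a Lipschitz-small
perturbation of the identity, hence sends a set of points of `K` of positive measure back into `K`.
By Tonelli, for a set of `x ∈ K` of positive measure the plane through `x` meets `K` in a set of
parameters `t` of positive measure, hence of positive `m`-dimensional Hausdorff measure, which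
contradicts `φ_{E,W}(K) = 0`.
-/

section NearIdentity

variable {X : Type*} [NormedAddCommGroup X] [NormedSpace ℝ X] [FiniteDimensional ℝ X]
  [MeasurableSpace X] [BorelSpace X]

theorem exists_pos_mul_measure_le_measure_image (μ : Measure X) [μ.IsAddHaarMeasure]
    {a : ℝ≥0} (ha : a < 1) :
    ∃ c : ℝ≥0, 0 < c ∧ ∀ (s : Set X) (f : X → X),
      ApproximatesLinearOn f (ContinuousLinearMap.id ℝ X) s c → a * μ s ≤ μ (f '' s) := by
  have lt_det : (a : ℝ≥0∞) < ENNReal.ofReal |(ContinuousLinearMap.id ℝ X).det| := by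
    rw [ContinuousLinearMap.det, ContinuousLinearMap.coe_id, LinearMap.det_id]
    simpa using ha
  obtain ⟨c, hc, hc_pos⟩ :=
    ((mul_le_addHaar_image_of_lt_det μ _ lt_det).and self_mem_nhdsWithin).exists
  exact ⟨c, hc_pos, hc⟩

/-- If `f` moved almost all of `K` off `K`, then `K` and the image of the moved part would be
disjoint subsets of a neighbourhood of `K` of measure less than `3/2 * μ K`, while that image has
measure at least `1/2 * μ K`. -/
theorem exists_pos_forall_measure_inter_preimage_ne_zero {μ : Measure X} [μ.IsAddHaarMeasure]
    {K : Set X} (hK : IsCompact K) (hμK : μ K ≠ 0) :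
    ∃ c : ℝ≥0, 0 < c ∧ ∀ f : X → X, ApproximatesLinearOn f (ContinuousLinearMap.id ℝ X) K c →
      (∀ x ∈ K, dist (f x) x < c) → μ (K ∩ f ⁻¹' K) ≠ 0 := by
  obtain ⟨V, hKV, hV, hμV⟩ : ∃ V ⊇ K, IsOpen V ∧ μ V < μ K + 2⁻¹ * μ K :=
    K.exists_isOpen_lt_of_lt _ (ENNReal.lt_add_right hK.measure_lt_top.ne (by simpa using hμK))
  obtain ⟨ε, hε, hεV⟩ := hK.exists_thickening_subset_open hV hKV
  obtain ⟨c, hc, half_le⟩ := exists_pos_mul_measure_le_measure_image μ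
    (inv_lt_one_of_one_lt₀ (one_lt_two : (1 : ℝ≥0) < 2))
  refine ⟨min c ε.toNNReal, by simp [hc, hε], fun f hf hdist hnull => hμV.not_ge ?_⟩
  have measure_sdiff : μ (K \ f ⁻¹' K) = μ K := measure_sdiff_null' hnull
  have image_subset : f '' (K \ f ⁻¹' K) ⊆ V := by
    rintro _ ⟨x, hx, rfl⟩
    refine hεV (mem_thickening_iff.2 ⟨x, hx.1, (hdist x hx.1).trans_le ?_⟩)
    simp [hε.le]
  have disjoint_image : Disjoint K (f '' (K \ f ⁻¹' K)) := by
    rw [Set.disjoint_right]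
    rintro _ ⟨x, hx, rfl⟩
    exact hx.2
  calc μ K + 2⁻¹ * μ K
      = μ K + 2⁻¹ * μ (K \ f ⁻¹' K) := by rw [measure_sdiff]
    _ ≤ μ K + μ (f '' (K \ f ⁻¹' K)) := by
        gcongr
        simpa using half_le _ f ((hf.mono_set Set.sdiff_subset).mono_num (min_le_left _ _))
    _ = μ (K ∪ f '' (K \ f ⁻¹' K)) := (measure_union' disjoint_image hK.measurableSet).symm
    _ ≤ μ V := measure_mono (Set.union_subset hKV image_subset)

end NearIdentity

section PlaneField

variable {X V : Type*} [NormedAddCommGroup X] [NormedSpace ℝ X]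
  [NormedAddCommGroup V] [NormedSpace ℝ V] {A : X → V →L[ℝ] X} {K : Set X}

theorem approximatesLinearOn_add_apply {L : ℝ≥0} (hA : LipschitzOnWith L A K) (t : V) :
    ApproximatesLinearOn (fun x => x + A x t) (ContinuousLinearMap.id ℝ X) K (L * ‖t‖₊) := by
  intro x hx y hy
  calc ‖x + A x t - (y + A y t) - (x - y)‖
      = ‖(A x - A y) t‖ := by rw [sub_apply]; congr 1; abel
    _ ≤ ‖A x - A y‖ * ‖t‖ := (A x - A y).le_opNorm t
    _ ≤ L * ‖x - y‖ * ‖t‖ := by gcongr; exact hA.norm_sub_le hx hy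
    _ = (L * ‖t‖₊ : ℝ≥0) * ‖x - y‖ := by push_cast; ring

theorem isClosed_setOf_mem_and_add_apply_mem (hK : IsClosed K) (hA : ContinuousOn A K) :
    IsClosed {p : X × V | p.1 ∈ K ∧ p.1 + A p.1 p.2 ∈ K} := by
  have hcont : ContinuousOn (fun p : X × V => p.1 + A p.1 p.2) (Prod.fst ⁻¹' K) :=
    continuousOn_fst.add
      ((hA.comp continuousOn_fst (Set.mapsTo_preimage _ _)).clm_apply continuousOn_snd)
  exact hcont.preimage_isClosed_of_isClosed (hK.preimage continuous_fst) hK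

theorem exists_forall_antilipschitzWith {Y : Type*} [TopologicalSpace Y] [FiniteDimensional ℝ V]
    {A : Y → V →L[ℝ] X} {K : Set Y} (hK : IsCompact K) (hA : ContinuousOn A K)
    (hinj : ∀ x ∈ K, Function.Injective (A x)) :
    ∃ C : ℝ≥0, ∀ x ∈ K, AntilipschitzWith C (A x) := by
  have hcont : ContinuousOn (fun p : Y × V => ‖A p.1 p.2‖) (K ×ˢ sphere 0 1) :=
    ((hA.comp continuousOn_fst fun _ hp => hp.1).clm_apply continuousOn_snd).norm
  have hpos : ∀ p ∈ K ×ˢ sphere (0 : V) 1, 0 < ‖A p.1 p.2‖ := fun p hp =>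
    norm_pos_iff.2 <|
      (map_ne_zero_iff _ (hinj p.1 hp.1)).2 (ne_zero_of_mem_unit_sphere ⟨p.2, hp.2⟩)
  obtain ⟨c, hc, hle⟩ := (hK.prod (isCompact_sphere (0 : V) 1)).exists_forall_le' hcont hpos
  refine ⟨c⁻¹.toNNReal, fun x hx => (A x).antilipschitz_of_bound fun t => ?_⟩
  rw [Real.coe_toNNReal _ (inv_nonneg.2 hc.le), inv_mul_eq_div, le_div_iff₀' hc]
  rcases eq_or_ne t 0 with rfl | ht
  · simp
  have hsphere : ‖t‖⁻¹ • t ∈ sphere (0 : V) 1 := by simp [norm_smul, ht]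
  have hnorm := hle (x, ‖t‖⁻¹ • t) ⟨hx, hsphere⟩
  rwa [map_smul, norm_smul, norm_inv, norm_norm, inv_mul_eq_div,
    le_div_iff₀ (norm_pos_iff.2 ht)] at hnorm

theorem hausdorffMeasure_setOf_add_apply_mem_le [MeasurableSpace X] [BorelSpace X]
    [MeasurableSpace V] [BorelSpace V] {T : V →L[ℝ] X} {C : ℝ≥0} (hT : AntilipschitzWith C T)
    {d : ℝ} (hd : 0 ≤ d) (x : X) (B : Set X) :
    μH[d] {t | x + T t ∈ B} ≤ (C : ℝ≥0∞) ^ d * μH[d] (B ∩ AffineSubspace.mk' x T.range) := by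
  have hanti : AntilipschitzWith C fun t => x + T t := fun t t' => by
    simpa only [edist_add_left] using hT t t'
  refine le_trans (measure_mono fun t ht => ?_) (hanti.hausdorffMeasure_preimage_le hd _)
  exact ⟨ht, t, by simp⟩

variable [FiniteDimensional ℝ X] [MeasurableSpace X] [BorelSpace X] {μ : Measure X}
  [μ.IsAddHaarMeasure]

theorem eventually_measure_setOf_add_apply_mem_ne_zero (hK : IsCompact K) (hμK : μ K ≠ 0)
    {L : ℝ≥0} (hA : LipschitzOnWith L A K) :
    ∀ᶠ t in 𝓝 (0 : V), μ {x | x ∈ K ∧ x + A x t ∈ K} ≠ 0 := by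
  obtain ⟨c, hc, hne⟩ := exists_pos_forall_measure_inter_preimage_ne_zero hK hμK
  obtain ⟨M, hM⟩ := hK.exists_bound_of_continuousOn hA.continuousOn
  have lipschitz_small : ∀ᶠ t in 𝓝 (0 : V), L * ‖t‖₊ < c :=
    (show Continuous fun t : V => L * ‖t‖₊ by fun_prop).continuousAt.eventually_lt
      continuousAt_const (by simpa using hc)
  have displacement_small : ∀ᶠ t in 𝓝 (0 : V), M * ‖t‖ < c :=
    (show Continuous fun t : V => M * ‖t‖ by fun_prop).continuousAt.eventually_lt
      continuousAt_const (by simpa using hc)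
  filter_upwards [lipschitz_small, displacement_small] with t hLt hMt
  refine hne _ ((approximatesLinearOn_add_apply hA t).mono_num hLt.le) fun x hx => ?_
  calc dist (x + A x t) x = ‖A x t‖ := by simp
    _ ≤ M * ‖t‖ := (A x).le_of_opNorm_le (hM x hx) t
    _ < c := hMt

variable [FiniteDimensional ℝ V] [MeasurableSpace V] [BorelSpace V]

theorem setLIntegral_measure_setOf_add_apply_mem_ne_zero (ν : Measure V) [SFinite ν]
    [ν.IsOpenPosMeasure] (hK : IsCompact K) (hμK : μ K ≠ 0) {L : ℝ≥0} (hA : LipschitzOnWith L A K) :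
    ∫⁻ x in K, ν {t | x + A x t ∈ K} ∂μ ≠ 0 := by
  have hmeas := (isClosed_setOf_mem_and_add_apply_mem hK.isClosed hA.continuousOn).measurableSet
  intro hzero
  have setLIntegral_eq : ∫⁻ x in K, ν {t | x + A x t ∈ K} ∂μ =
      ∫⁻ x in K, ν {t | x ∈ K ∧ x + A x t ∈ K} ∂μ :=
    setLIntegral_congr_fun hK.measurableSet fun x hx => by simp [hx]
  have ae_mem : ∀ᵐ x ∂μ, x ∈ K → ν {t | x ∈ K ∧ x + A x t ∈ K} = 0 :=
    (setLIntegral_eq_zero_iff hK.measurableSet (measurable_measure_prodMk_left hmeas)).1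
      (setLIntegral_eq ▸ hzero)
  have ae_ae : ∀ᵐ x ∂μ, ∀ᵐ t ∂ν, ¬(x ∈ K ∧ x + A x t ∈ K) := by
    filter_upwards [ae_mem] with x hx
    by_cases hxK : x ∈ K
    · simpa [ae_iff] using hx hxK
    · simp [hxK]
  have ae_null : ∀ᵐ t ∂ν, μ {x | x ∈ K ∧ x + A x t ∈ K} = 0 := by
    simpa only [ae_iff, not_not] using (Measure.ae_ae_comm hmeas.compl).1 ae_ae
  obtain ⟨t, ht_ne, ht_null⟩ := ((eventually_measure_setOf_add_apply_mem_ne_zero hK hμK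
    hA).and_frequently (mem_closure_iff_frequently.1 (Measure.dense_of_ae ae_null 0))).exists
  exact ht_ne ht_null

/-- The integrand is not known to be measurable, so the vanishing of its lower integral says
nothing pointwise: it is compared with the integrand of
`setLIntegral_measure_setOf_add_apply_mem_ne_zero` through a constant uniform in `x ∈ K`. -/
theorem setLIntegral_hausdorffMeasure_inter_affineSubspace_ne_zero (hK : IsCompact K)
    (hμK : μ K ≠ 0) {L : ℝ≥0} (hA : LipschitzOnWith L A K)
    (hinj : ∀ x ∈ K, Function.Injective (A x)) :
    ∫⁻ x in K, μH[Module.finrank ℝ V] (K ∩ AffineSubspace.mk' x (A x).range) ∂μ ≠ 0 := by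
  obtain ⟨C, hC⟩ := exists_forall_antilipschitzWith hK hA.continuousOn hinj
  let d : ℝ := (Module.finrank ℝ V : ℕ)
  have hCd : (C : ℝ≥0∞) ^ d ≠ ⊤ :=
    ENNReal.rpow_ne_top_of_nonneg (Nat.cast_nonneg _) ENNReal.coe_ne_top
  intro hzero
  refine setLIntegral_measure_setOf_add_apply_mem_ne_zero μH[d] hK hμK hA (le_antisymm ?_ zero_le)
  calc ∫⁻ x in K, μH[d] {t | x + A x t ∈ K} ∂μ
      ≤ ∫⁻ x in K, (C : ℝ≥0∞) ^ d * μH[d] (K ∩ AffineSubspace.mk' x (A x).range) ∂μ :=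
        setLIntegral_mono' hK.measurableSet fun x hx =>
          hausdorffMeasure_setOf_add_apply_mem_le (hC x hx) (Nat.cast_nonneg _) x K
    _ = 0 := by rw [lintegral_const_mul' _ _ hCd, hzero, mul_zero]

theorem measure_eq_zero_of_setLIntegral_hausdorffMeasure_inter_affineSubspace_eq_zero {B : Set X}
    (hB : MeasurableSet B) (hA : LocallyLipschitzOn B A)
    (hinj : ∀ x ∈ B, Function.Injective (A x))
    (hzero : ∫⁻ x in B, μH[Module.finrank ℝ V] (B ∩ AffineSubspace.mk' x (A x).range) ∂μ = 0) :
    μ B = 0 := by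
  by_contra hμB
  obtain ⟨K, hKB, hK, hμK⟩ := hB.exists_lt_isCompact (pos_iff_ne_zero.2 hμB)
  obtain ⟨L, hL⟩ := (hA.mono hKB).exists_lipschitzOnWith_of_compact hK
  refine setLIntegral_hausdorffMeasure_inter_affineSubspace_ne_zero hK hμK.ne' hL
    (fun x hx => hinj x (hKB hx)) (le_antisymm ?_ zero_le)
  calc ∫⁻ x in K, μH[Module.finrank ℝ V] (K ∩ AffineSubspace.mk' x (A x).range) ∂μ
      ≤ ∫⁻ x in B, μH[Module.finrank ℝ V] (B ∩ AffineSubspace.mk' x (A x).range) ∂μ := by gcongr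
    _ = 0 := hzero

end PlaneField

section Frame

variable {ι X : Type*} [Fintype ι] [NormedAddCommGroup X] [NormedSpace ℝ X]

/-- The synthesis map `t ↦ ∑ i, t i • b i` of a finite family `b`, as a continuous linear map that
depends continuously and linearly on `b`. -/
def synthesisCLM : (ι → X) →L[ℝ] (ι → ℝ) →L[ℝ] X :=
  ∑ i, (ContinuousLinearMap.smulRightL ℝ (ι → ℝ) X (ContinuousLinearMap.proj i)).comp
    (ContinuousLinearMap.proj i)

theorem coe_synthesisCLM (b : ι → X) :
    (synthesisCLM b : (ι → ℝ) →ₗ[ℝ] X) = Fintype.linearCombination ℝ b := by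
  ext1
  simp [synthesisCLM, Fintype.linearCombination_apply]

theorem range_synthesisCLM (b : ι → X) :
    (synthesisCLM b).range = Submodule.span ℝ (Set.range b) := by
  rw [coe_synthesisCLM, Fintype.range_linearCombination]

theorem injective_synthesisCLM {b : ι → X} (hb : LinearIndependent ℝ b) :
    Function.Injective (synthesisCLM b) := by
  rw [← ContinuousLinearMap.coe_coe, coe_synthesisCLM]
  exact hb.fintypeLinearCombination_injective

theorem locallyLipschitzOn_synthesisCLM {Y : Type*} [PseudoEMetricSpace Y] {s : Set Y}
    {w : ι → Y → X} (hw : ∀ i, LocallyLipschitzOn s (w i)) :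
    LocallyLipschitzOn s fun x => synthesisCLM fun i => w i x := by
  intro x hx
  choose L N hN hL using fun i => hw i hx
  have hpi : LipschitzOnWith (∑ i, L i) (fun y i => w i y) (⋂ i, N i) := fun y hy z hz => by
    rw [edist_pi_le_iff]
    intro i
    rw [Set.mem_iInter] at hy hz
    calc edist (w i y) (w i z) ≤ L i * edist y z := hL i (hy i) (hz i)
      _ ≤ (∑ i, L i : ℝ≥0) * edist y z := by
        gcongr
        exact Finset.single_le_sum_of_canonicallyOrdered (Finset.mem_univ i)
  exact ⟨_, _, iInter_mem.2 hN, synthesisCLM.lipschitz.comp_lipschitzOnWith hpi⟩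

end Frame

theorem volume_eq_zero_of_phiEW_eq_zero {n m : ℕ} {E B : Set (En n)} {w : Fin m → En n → En n}
    (hw : ∀ i, LocallyLipschitzOn B (w i)) (hind : ∀ x ∈ B, LinearIndependent ℝ fun i => w i x)
    (hB : MeasurableSet B) (hBE : B ⊆ E) (hφ : phiEW n m E w B = 0) : volume B = 0 := by
  refine measure_eq_zero_of_setLIntegral_hausdorffMeasure_inter_affineSubspace_eq_zero hB
    (locallyLipschitzOn_synthesisCLM hw) (fun x hx => injective_synthesisCLM (hind x hx))
    (le_antisymm ?_ zero_le)
  simp only [range_synthesisCLM, Module.finrank_fin_fun]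
  exact (lintegral_mono_set hBE).trans hφ.le

theorem Z_positive_general {n m : ℕ} {E : Set (En n)} (hE : MeasurableSet E)
    {w : Fin m → En n → En n} (hw : ∀ i, LocallyLipschitzOn E (w i))
    (hind : ∀ x ∈ E, LinearIndependent ℝ fun i => w i x)
    {Z : En n → ℝ≥0∞} (hZ : Measurable Z)
    (hφ : ∀ B : Set (En n), MeasurableSet B → phiEW n m E w B = ∫⁻ u in B, Z u ∂volume) :
    ∀ᵐ u ∂(volume.restrict E), 0 < Z u := by
  set N : Set (En n) := E ∩ Z ⁻¹' {0}
  have hNE : N ⊆ E := Set.inter_subset_left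
  have hN : MeasurableSet N := hE.inter (hZ (measurableSet_singleton 0))
  have phi_eq_zero : phiEW n m E w N = 0 := by
    rw [hφ N hN, setLIntegral_eq_zero_iff hN hZ]
    exact .of_forall fun u hu => hu.2
  have volume_eq_zero : volume N = 0 := volume_eq_zero_of_phiEW_eq_zero
    (fun i => (hw i).mono hNE) (fun x hx => hind x (hNE hx)) hN hNE phi_eq_zero
  rw [ae_restrict_iff' hE]
  filter_upwards [measure_eq_zero_iff_ae_notMem.1 volume_eq_zero] with u hu huE
  exact pos_iff_ne_zero.2 fun hZu => hu ⟨huE, hZu⟩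

/-- Positivity of the Radon–Nikodým derivative `𝒵_E W` a.e. on `E`,
when `diam E` is small. -/
theorem Z_positive
    (n : ℕ) (Λ : ℝ≥0) (hΛ : 0 < Λ) :
    ∃ δ : ℝ, 0 < δ ∧
      ∀ (m : ℕ), 1 ≤ m → m + 1 ≤ n →
      ∀ (E U : Set (En n)), MeasurableSet E → volume E < ⊤ → IsOpen U → E ⊆ U →
      ∀ (w : Fin m → En n → En n) (v : Fin (n - m) → En n → En n),
        (∀ i, LipschitzOnWith Λ (w i) U) →
        (∀ i, LipschitzOnWith Λ (v i) U) →
        (∀ x ∈ U, Orthonormal ℝ (Sum.elim (fun i => w i x) (fun i => v i x))) →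
        (∀ x ∈ U, (spanW w x)ᗮ = Submodule.span ℝ (Set.range fun i => v i x)) →
        ∀ (Z : En n → ℝ≥0∞), Measurable Z →
          (∀ B : Set (En n), MeasurableSet B → phiEW n m E w B = ∫⁻ u in B, Z u ∂volume) →
          Metric.diam E ≤ δ →
          ∀ᵐ u ∂(volume.restrict E), 0 < Z u := by
  refine ⟨1, one_pos, fun m _ _ E U hE _ _ hEU w v hw _ ho _ Z hZ hφ _ => ?_⟩
  exact Z_positive_general hE (fun i _ _ => ⟨Λ, E, self_mem_nhdsWithin, (hw i).mono hEU⟩)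
    (fun x hx => (ho x (hEU hx)).linearIndependent.comp Sum.inl Sum.inl_injective) hZ hφ
end
end

section
/- Let 1 ≤ q ≤ n−1 be an integer and let v₁,…,v_q be an orthonormal family in ℝⁿ. Then there exists a strictly increasing map λ : {1,…,q} → {1,…,n} such that |det((⟨v_k, e_{λ(j)}⟩)_{j,k=1,…,q})| ≥ binom(n,q)^{−1/2}, where e₁,…,e_n is the canonical basis of ℝⁿ. -/
open MeasureTheory Metric Filter
open scoped ENNReal NNReal RealInnerProductSpace Topology

noncomputable section

/-!
In the exterior power `⋀^q ℝⁿ` with its Gram inner product, an orthonormal family wedges to a unit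
vector, and the wedges of increasing `q`-tuples of basis vectors form an orthonormal basis with
`binom(n,q)` elements. The coordinates of `v₁ ∧ ⋯ ∧ v_q` in this basis are the `q × q` minors, so
their squares sum to `1` and the largest square is at least `1 / binom(n,q)`.
-/

section OrthonormalBasis

variable {E : Type*} [NormedAddCommGroup E] {ι : Type*} [Fintype ι]

theorem exists_norm_le_sqrt_card_mul_norm_inner {𝕜 : Type*} [RCLike 𝕜] [InnerProductSpace 𝕜 E]
    [Nonempty ι] (b : OrthonormalBasis ι 𝕜 E) (x : E) :
    ∃ i, ‖x‖ ≤ √(Fintype.card ι) * ‖inner 𝕜 (b i) x‖ := by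
  obtain ⟨i, hi⟩ := exists_eq_ciSup_of_finite (f := fun i => ‖inner 𝕜 (b i) x‖)
  exact ⟨i, by simpa only [hi] using b.norm_le_card_mul_iSup_norm_inner x⟩

variable [InnerProductSpace ℝ E] {q : ℕ}

theorem norm_ιMulti_eq_sqrt_det_gram [FiniteDimensional ℝ E] (v : Fin q → E) :
    ‖exteriorPower.ιMulti ℝ q v‖ = √(Matrix.gram ℝ v).det := by
  rw [norm_eq_sqrt_real_inner, exteriorPower.inner_ιMulti_self]

variable [LinearOrder ι]

theorem inner_exteriorPower_ιMulti_eq_det [FiniteDimensional ℝ E] (b : OrthonormalBasis ι ℝ E)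
    (s : Set.powersetCard ι q) (v : Fin q → E) :
    ⟪b.exteriorPower q s, exteriorPower.ιMulti ℝ q v⟫ =
      (Matrix.of fun j k => ⟪v k, b (Set.powersetCard.ofFinEmbEquiv.symm s j)⟫).det := by
  rw [← (b.exteriorPower q).coe_toBasis, b.toBasis_exteriorPower, exteriorPower.basis_apply,
    real_inner_comm, b.coe_toBasis]
  exact exteriorPower.inner_ιMulti_ιMulti v _

theorem exists_large_minor_general (b : OrthonormalBasis ι ℝ E) (hq : q ≤ Fintype.card ι)
    (v : Fin q → E) :
    ∃ l : Fin q → ι, StrictMono l ∧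
      √(Matrix.gram ℝ v).det / √((Fintype.card ι).choose q)
        ≤ |(Matrix.of fun j k => ⟪v k, b (l j)⟫).det| := by
  have : FiniteDimensional ℝ E := b.toBasis.finiteDimensional_of_finite
  have card_eq : Fintype.card (Set.powersetCard ι q) = (Fintype.card ι).choose q := by
    simp only [Fintype.card_eq_nat_card, Set.powersetCard.card]
  have choose_pos : 0 < (Fintype.card ι).choose q := Nat.choose_pos hq
  have : Nonempty (Set.powersetCard ι q) := Fintype.card_pos_iff.1 (card_eq ▸ choose_pos)
  obtain ⟨s, hs⟩ := exists_norm_le_sqrt_card_mul_norm_inner (b.exteriorPower q)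
    (exteriorPower.ιMulti ℝ q v)
  rw [norm_ιMulti_eq_sqrt_det_gram, inner_exteriorPower_ιMulti_eq_det, card_eq,
    Real.norm_eq_abs] at hs
  exact ⟨_, (Set.powersetCard.ofFinEmbEquiv.symm s).strictMono,
    (div_le_iff₀' (by positivity)).2 hs⟩

end OrthonormalBasis

/-- For an orthonormal family `v₁,…,v_q` in `ℝⁿ`, some `q×q` minor of the
matrix of coordinates has determinant at least `binom(n,q)^{−1/2}` in absolute value. -/
theorem exists_large_minor
    (n q : ℕ) (hq : 1 ≤ q) (hqn : q + 1 ≤ n)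
    (v : Fin q → En n) (hv : Orthonormal ℝ v) :
    ∃ l : Fin q → Fin n, StrictMono l ∧
      (Real.sqrt (n.choose q))⁻¹
        ≤ |Matrix.det (Matrix.of fun j k : Fin q => ⟪v k, EuclideanSpace.single (l j) (1 : ℝ)⟫)| := by
  simpa [Matrix.gram_eq_one_iff_orthonormal.2 hv] using
    exists_large_minor_general (EuclideanSpace.basisFun (Fin n) ℝ)
      (by rw [Fintype.card_fin]; omega) v
end
end

section
/- Let 1 ≤ m ≤ n−1, let B ⊂ ℝⁿ be Borel measurable, and let u ∈ ℝⁿ. Then the function h_B : V(n,n−m) × ℝ^{n−m} → [0,∞] defined by h_B(ξ, y) = ℋ^m(B ∩ π_{ξ,u}^{-1}{y}) is Borel measurable. -/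
open MeasureTheory Metric Filter
open scoped ENNReal NNReal RealInnerProductSpace Topology

noncomputable section

/-!
Fix an `m`-dimensional plane `p + K`. The cylinder of points `z` whose component in `Kᗮ` has norm
less than `1` and whose component `w` in `K` satisfies `p + w ∈ B` is, up to the splitting
`E = K × Kᗮ`, the product of the slice of `B` along the plane with the unit ball of `Kᗮ`. Hence
the Hausdorff measure of the slice is a constant, depending only on dimensions, times the Lebesgue
measure of the cylinder. When the plane varies measurably, the cylinders are the sections of one
measurable set, so Tonelli's theorem applies. For the fibre of an orthonormal frame, `K` is the
orthogonal complement of its span, and projections onto it are given by an explicit formula.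
-/

lemma unitBallVol_ne_zero (k : ℕ) : unitBallVol k ≠ 0 :=
  (measure_ball_pos _ _ one_pos).ne'

lemma unitBallVol_ne_top (k : ℕ) : unitBallVol k ≠ ∞ :=
  measure_ball_lt_top.ne

lemma hausdorffMeasure_eq_smul_euclideanHausdorffMeasure {X : Type*} [EMetricSpace X]
    [MeasurableSpace X] [BorelSpace X] (d : ℕ) :
    (μH[d] : Measure X) =
      (Measure.addHaarScalarFactor (volume : Measure (En d)) μH[d])⁻¹ • μHE[d] := by
  rw [Measure.euclideanHausdorffMeasure_def,
    inv_smul_smul₀ (Measure.addHaarScalarFactor_volume_hausdorffMeasure_ne_zero d)]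

section

variable {E : Type*} [NormedAddCommGroup E] [InnerProductSpace ℝ E]

section Frame

variable {ι : Type*} {ξ : ι → E}

lemma mem_span_range_orthogonal_iff (z : E) :
    z ∈ (Submodule.span ℝ (Set.range ξ))ᗮ ↔ ∀ i, ⟪ξ i, z⟫ = 0 := by
  rw [← Submodule.span_singleton_le_iff_mem, ← Submodule.isOrtho_iff_le, Submodule.isOrtho_comm,
    Submodule.isOrtho_span]
  simp

variable [Fintype ι]

lemma inner_sub_eq_iff_sub_mem_span_range_orthogonal (hξ : Orthonormal ℝ ξ) (u z : E) (y : ι → ℝ) :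
    (∀ i, ⟪ξ i, z - u⟫ = y i) ↔
      z - (u + ∑ i, y i • ξ i) ∈ (Submodule.span ℝ (Set.range ξ))ᗮ := by
  simp only [mem_span_range_orthogonal_iff, ← sub_sub, inner_sub_right (ξ _) (z - u),
    hξ.inner_right_fintype, sub_eq_zero]

lemma starProjection_span_range_orthogonal
    [(Submodule.span ℝ (Set.range ξ))ᗮ.HasOrthogonalProjection]
    (hξ : Orthonormal ℝ ξ) (z : E) :
    (Submodule.span ℝ (Set.range ξ))ᗮ.starProjection z = z - ∑ i, ⟪ξ i, z⟫ • ξ i := by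
  refine Submodule.eq_starProjection_of_mem_orthogonal ?_ ?_
  · simp [mem_span_range_orthogonal_iff, inner_sub_right, hξ.inner_right_fintype]
  · rw [sub_sub_cancel]
    exact Submodule.le_orthogonal_orthogonal _ <| Submodule.sum_smul_mem _ _ fun i _ ↦
      Submodule.subset_span ⟨i, rfl⟩

lemma finrank_span_range_orthogonal [FiniteDimensional ℝ E] (hξ : LinearIndependent ℝ ξ) {m : ℕ}
    (hm : Fintype.card ι + m = Module.finrank ℝ E) :
    Module.finrank ℝ (Submodule.span ℝ (Set.range ξ))ᗮ = m :=
  Submodule.finrank_add_finrank_orthogonal' (by rw [finrank_span_eq_card hξ, hm])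

end Frame

variable [FiniteDimensional ℝ E] [MeasurableSpace E] [BorelSpace E]

lemma volume_ball_zero_one_eq_unitBallVol :
    volume (ball (0 : E) 1) = unitBallVol (Module.finrank ℝ E) := by
  rw [unitBallVol, ← (stdOrthonormalBasis ℝ E).measurePreserving_repr.measure_preimage
    measurableSet_ball.nullMeasurableSet, LinearIsometryEquiv.preimage_ball, map_zero]

lemma euclideanHausdorffMeasure_inter_setOf_sub_mem_eq_volume (K : Submodule ℝ E) (p : E)
    (B : Set E) :
    μHE[Module.finrank ℝ K] (B ∩ {z | z - p ∈ K}) = volume {w : K | p + w ∈ B} := by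
  have isometry_param : Isometry fun w : K ↦ p + (w : E) :=
    (isometry_add_left p).comp isometry_subtype_coe
  rw [← InnerProductSpace.euclideanHausdorffMeasure_eq_volume,
    ← isometry_param.euclideanHausdorffMeasure_image]
  congr 1
  ext z
  constructor
  · rintro ⟨hzB, hzK⟩
    exact ⟨⟨z - p, hzK⟩, by simpa using hzB, by simp⟩
  · rintro ⟨w, hw, rfl⟩
    exact ⟨hw, by simp⟩

lemma volume_setOf_orthogonalProjectionOnto_mem_and_mem (K : Submodule ℝ E) (A : Set K)
    (C : Set Kᗮ) :
    volume {z | K.orthogonalProjectionOnto z ∈ A ∧ Kᗮ.orthogonalProjectionOnto z ∈ C} =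
      volume A * volume C := by
  have splitting := K.measurePreserving_measurableEquivProd (0 : E)
  rw [InnerProductSpace.euclideanHausdorffMeasure_eq_volume] at splitting
  rw [← Measure.prod_prod, ← Measure.volume_eq_prod, ← splitting.measure_preimage_equiv]
  congr 1
  ext z
  simp

lemma euclideanHausdorffMeasure_inter_setOf_sub_mem_eq_div (K : Submodule ℝ E) (p : E) (B : Set E) :
    μHE[Module.finrank ℝ K] (B ∩ {z | z - p ∈ K}) =
      volume {z | p + K.starProjection z ∈ B ∧ ‖z - K.starProjection z‖ < 1} /
        unitBallVol (Module.finrank ℝ Kᗮ) := by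
  have cylinder :=
    volume_setOf_orthogonalProjectionOnto_mem_and_mem K {w : K | p + w ∈ B} (ball 0 1)
  rw [← euclideanHausdorffMeasure_inter_setOf_sub_mem_eq_volume,
    volume_ball_zero_one_eq_unitBallVol] at cylinder
  rw [ENNReal.eq_div_iff (unitBallVol_ne_zero _) (unitBallVol_ne_top _), mul_comm, ← cylinder]
  congr 1
  ext z
  simp

variable {X : Type*} [MeasurableSpace X] {m : ℕ}

lemma measurable_hausdorffMeasure_inter_setOf_sub_mem {K : X → Submodule ℝ E}
    (finrank_K : ∀ x, Module.finrank ℝ (K x) = m)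
    (hK : Measurable fun q : X × E ↦ (K q.1).starProjection q.2)
    {p : X → E} (hp : Measurable p) {B : Set (X × E)} (hB : MeasurableSet B) :
    Measurable fun x ↦ μH[m] (Prod.mk x ⁻¹' B ∩ {z | z - p x ∈ K x}) := by
  let cylinders : Set (X × E) :=
    {q | (q.1, p q.1 + (K q.1).starProjection q.2) ∈ B ∧ ‖q.2 - (K q.1).starProjection q.2‖ < 1}
  have measurableSet_cylinders : MeasurableSet cylinders :=
    .inter (hB.preimage (measurable_fst.prodMk ((hp.comp measurable_fst).add hK)))
      (measurableSet_lt (measurable_snd.sub hK).norm measurable_const)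
  have slice_eq (x : X) : μHE[m] (Prod.mk x ⁻¹' B ∩ {z | z - p x ∈ K x}) =
      volume (Prod.mk x ⁻¹' cylinders) / unitBallVol (Module.finrank ℝ E - m) := by
    have finrank_orthogonal : Module.finrank ℝ (K x)ᗮ = Module.finrank ℝ E - m := by
      rw [← finrank_K x, ← (K x).finrank_add_finrank_orthogonal, Nat.add_sub_cancel_left]
    rw [← finrank_orthogonal, ← finrank_K x]
    exact euclideanHausdorffMeasure_inter_setOf_sub_mem_eq_div (K x) (p x) (Prod.mk x ⁻¹' B)
  rw [hausdorffMeasure_eq_smul_euclideanHausdorffMeasure]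
  simp only [Measure.smul_apply, slice_eq]
  exact ((measurable_measure_prodMk_left measurableSet_cylinders).div_const _).const_smul _

theorem measurable_slice_hausdorff_general {ι : Type*} [Fintype ι]
    (hm : Fintype.card ι + m = Module.finrank ℝ E)
    {ξ : X → ι → E} (hξ : Measurable ξ) (orthonormal_ξ : ∀ x, Orthonormal ℝ (ξ x))
    {y : X → ι → ℝ} (hy : Measurable y) {u : X → E} (hu : Measurable u)
    {B : Set (X × E)} (hB : MeasurableSet B) :
    Measurable fun x ↦ μH[m] (Prod.mk x ⁻¹' B ∩ {z | ∀ i, ⟪ξ x i, z - u x⟫ = y x i}) := by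
  simp only [inner_sub_eq_iff_sub_mem_span_range_orthogonal (orthonormal_ξ _)]
  refine measurable_hausdorffMeasure_inter_setOf_sub_mem
    (fun x ↦ finrank_span_range_orthogonal (orthonormal_ξ x).linearIndependent hm) ?_
    (by fun_prop) hB
  simp only [starProjection_span_range_orthogonal (orthonormal_ξ _)]
  fun_prop

end

/-- For Borel `B ⊆ ℝⁿ` and `u ∈ ℝⁿ`, the function
`(ξ, y) ↦ ℋ^m(B ∩ π_{ξ,u}^{-1}{y})` is Borel measurable on `V(n,n−m) × ℝ^{n−m}`. -/
theorem measurable_slice_hausdorff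
    (n m : ℕ) (hm : 1 ≤ m) (hmn : m + 1 ≤ n)
    (B : Set (En n)) (hB : MeasurableSet B) (u : En n) :
    Measurable (fun p : {ξ : Fin (n - m) → En n // Orthonormal ℝ ξ} × En (n - m) =>
      μH[(m : ℝ)] (B ∩ {x | ∀ i, ⟪(p.1 : Fin (n - m) → En n) i, x - u⟫ = p.2 i})) :=
  measurable_slice_hausdorff_general (E := En n) (m := m) (B := Prod.snd ⁻¹' B)
    (by simp [Nat.sub_add_cancel (Nat.le_of_succ_le hmn)]) (by fun_prop) (fun p ↦ p.1.2)
    (by fun_prop) measurable_const (measurable_snd hB)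
end
end

section
/- Let 1 ≤ m ≤ n−1, let B ⊂ ℝⁿ be compact, let W be an m-dimensional affine subspace of ℝⁿ, and let v₁,…,v_{n−m} be an orthonormal basis of the orthogonal complement of the direction of W. Then the function ℝ^{n−m} → [0,∞), y ↦ ℋ^m(B ∩ (W + Σ_{i=1}^{n−m} yᵢ vᵢ)), is upper semicontinuous. -/
open MeasureTheory Metric Filter
open scoped ENNReal NNReal RealInnerProductSpace Topology

noncomputable section

/-!
The slice of `B` by the plane `q + W`, with `W` linear, is isometric to the part of the translated
compact set `B - q` lying in `W`. As `q` varies, the sets `B - q` move upper hemicontinuously, hence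
so do their traces on the closed set `W`: a small change of `q` keeps the trace inside any given
open neighbourhood. On `W` the `m`-dimensional Hausdorff measure is a Haar measure, hence outer
regular, so such a neighbourhood can be chosen with measure arbitrarily close to that of the slice.
-/

section Hemicontinuity

variable {X Y Z : Type*} [TopologicalSpace X] [TopologicalSpace Y] [TopologicalSpace Z]

theorem upperHemicontinuous_image_of_isCompact {K : Set Y} (hK : IsCompact K) {F : X → Y → Z}
    (hF : Continuous F.uncurry) : UpperHemicontinuous fun x => F x '' K := by
  refine UpperHemicontinuous.of_forall_isOpen fun x₀ U hU hKU => ?_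
  simp only [Set.image_subset_iff] at hKU ⊢
  exact hK.eventually_forall_of_forall_eventually fun y hy =>
    hF.continuousAt.eventually_mem (hU.mem_nhds (hKU hy))

theorem upperSemicontinuous_measure_of_upperHemicontinuous [MeasurableSpace Y] (μ : Measure Y)
    [μ.OuterRegular] {f : X → Set Y} (hf : UpperHemicontinuous f) :
    UpperSemicontinuous fun x => μ (f x) := by
  intro x₀ c hc
  obtain ⟨U, hfU, hU, hUc⟩ := (f x₀).exists_isOpen_lt_of_lt c hc
  filter_upwards [hf.forall_isOpen x₀ U hU hfU] with x hx
  exact (measure_mono hx).trans_lt hUc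

end Hemicontinuity

section TranslatedSlices

variable {X E : Type*} [TopologicalSpace X] [NormedAddCommGroup E] [MeasurableSpace E]
  [BorelSpace E]

theorem hausdorffMeasure_inter_translate {d : ℝ} (hd : 0 ≤ d) (B S : Set E) (a : E) :
    μH[d] (B ∩ {z | z - a ∈ S}) = μH[d] ((↑) ⁻¹' ((· - a) '' B) : Set S) := by
  calc μH[d] (B ∩ {z | z - a ∈ S})
      = μH[d] ((· - a) '' (B ∩ (· - a) ⁻¹' S)) :=
        ((IsometryEquiv.subRight a).hausdorffMeasure_image d _).symm
    _ = μH[d] ((· - a) '' B ∩ S) := by rw [Set.image_inter_preimage]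
    _ = μH[d] ((↑) ⁻¹' ((· - a) '' B) : Set S) := by
        rw [isometry_subtype_coe.hausdorffMeasure_preimage (.inl hd), Subtype.range_coe]

theorem upperSemicontinuous_hausdorffMeasure_inter_translate {d : ℝ} (hd : 0 ≤ d)
    {B S : Set E} (hB : IsCompact B) (hS : IsClosed S) [(μH[d] : Measure S).OuterRegular]
    {q : X → E} (hq : Continuous q) :
    UpperSemicontinuous fun x => μH[d] (B ∩ {z | z - q x ∈ S}) := by
  have translates : UpperHemicontinuous fun x => (· - q x) '' B :=
    upperHemicontinuous_image_of_isCompact hB (by fun_prop)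
  have traces : UpperHemicontinuous fun x => ((↑) ⁻¹' ((· - q x) '' B) : Set S) :=
    translates.isInducing_comp .subtypeVal (by rwa [Subtype.range_coe])
  simpa only [hausdorffMeasure_inter_translate hd] using
    upperSemicontinuous_measure_of_upperHemicontinuous μH[d] traces

theorem upperSemicontinuous_translated_slices_general [NormedSpace ℝ E] {B : Set E}
    (hB : IsCompact B) (W : Submodule ℝ E) [FiniteDimensional ℝ W] {q : X → E}
    (hq : Continuous q) :
    UpperSemicontinuous fun x => μH[Module.finrank ℝ W] (B ∩ {z | z - q x ∈ W}) :=
  upperSemicontinuous_hausdorffMeasure_inter_translate (Nat.cast_nonneg _) hB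
    W.closed_of_finiteDimensional hq

end TranslatedSlices

/-- For compact `B ⊆ ℝⁿ`, an affine `m`-plane `W = p + W₀` and an
orthonormal basis `v₁,…,v_{n−m}` of `W₀ᗮ`, the function
`y ↦ ℋ^m(B ∩ (W + Σᵢ yᵢ vᵢ))` is upper semicontinuous on `ℝ^{n−m}`. -/
theorem upperSemicontinuous_translated_slices
    (n m : ℕ) (hm : 1 ≤ m) (hmn : m + 1 ≤ n)
    (B : Set (En n)) (hB : IsCompact B)
    (p : En n) (W₀ : Submodule ℝ (En n)) (hrank : Module.finrank ℝ W₀ = m)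
    (v : Fin (n - m) → En n) (hv : Orthonormal ℝ v)
    (hvspan : Submodule.span ℝ (Set.range v) = W₀ᗮ) :
    UpperSemicontinuous (fun y : En (n - m) =>
      μH[(m : ℝ)] (B ∩ {z | z - (p + ∑ i, y i • v i) ∈ W₀})) := by
  subst hrank
  exact upperSemicontinuous_translated_slices_general hB W₀ (by fun_prop)
end
end

section
/- Let 1 ≤ m ≤ n−1 and let 𝒱 ⊂ G(n,m) be a nonempty closed set with diam 𝒱 < 1. Then there exists a Lipschitz map Ξ = (Ξ₁,…,Ξ_m) : 𝒱 → V(n,m) such that W = span{Ξ₁(W),…,Ξ_m(W)} for every W ∈ 𝒱. -/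
open MeasureTheory Metric Filter
open scoped ENNReal NNReal RealInnerProductSpace Topology

noncomputable section

/-!
Fix `W₀ ∈ 𝒱` and an orthonormal basis `b` of `W₀`. When `‖P_W - P_{W₀}‖ ≤ r < 1`, we have
`‖P_W x‖ ≥ (1 - r) ‖x‖` for `x ∈ W₀`, so `P_W` maps `b` to a basis of `W`, and the Gram–Schmidt
process turns this basis into the desired frame. Its `k`-th vector before normalization is
`P_W (b k - z)` for some `z` in the span of the preceding `b i`, hence has norm at least `1 - r`.
Since normalization is Lipschitz away from zero, induction on `k` shows that the normalized `k`-th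
vector is a Lipschitz function of `P_W b`, hence of `P_W`.
-/

open InnerProductSpace Module

section Normalization

variable {𝕜 E : Type*} [RCLike 𝕜] [NormedAddCommGroup E] [NormedSpace 𝕜 E]

lemma norm_mul_norm_inv_norm_smul_sub_le (x y : E) (hy : y ≠ 0) :
    ‖x‖ * ‖(‖x‖ : 𝕜)⁻¹ • x - (‖y‖ : 𝕜)⁻¹ • y‖ ≤ 2 * ‖x - y‖ := by
  rcases eq_or_ne x 0 with rfl | hx
  · simp
  have hx' : (‖x‖ : 𝕜) ≠ 0 := by simpa using hx
  have hy' : (‖y‖ : 𝕜) ≠ 0 := by simpa using hy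
  have hsplit : (‖x‖ : 𝕜) • ((‖x‖ : 𝕜)⁻¹ • x - (‖y‖ : 𝕜)⁻¹ • y)
      = (x - y) - ((‖x‖ - ‖y‖ : ℝ) : 𝕜) • ((‖y‖ : 𝕜)⁻¹ • y) := by
    rw [smul_sub, smul_inv_smul₀ hx', RCLike.ofReal_sub, sub_smul, smul_inv_smul₀ hy']
    abel
  calc ‖x‖ * ‖(‖x‖ : 𝕜)⁻¹ • x - (‖y‖ : 𝕜)⁻¹ • y‖
      = ‖(x - y) - ((‖x‖ - ‖y‖ : ℝ) : 𝕜) • ((‖y‖ : 𝕜)⁻¹ • y)‖ := by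
        rw [← hsplit, norm_smul, RCLike.norm_ofReal, abs_norm]
    _ ≤ ‖x - y‖ + |‖x‖ - ‖y‖| * 1 := by
        grw [norm_sub_le, norm_smul, RCLike.norm_ofReal, norm_smul_inv_norm hy]
    _ ≤ 2 * ‖x - y‖ := by linarith [abs_norm_sub_norm_le x y]

lemma lipschitzOnWith_inv_norm_smul {c : ℝ≥0} (hc : 0 < c) :
    LipschitzOnWith (2 / c) (fun x : E ↦ (‖x‖ : 𝕜)⁻¹ • x) {x | c ≤ ‖x‖} := by
  refine LipschitzOnWith.of_dist_le_mul fun x hx y hy ↦ ?_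
  have hc' : (0 : ℝ) < c := by exact_mod_cast hc
  have hy0 : y ≠ 0 := norm_pos_iff.1 (hc'.trans_le hy)
  rw [dist_eq_norm, dist_eq_norm, NNReal.coe_div, NNReal.coe_ofNat, div_mul_eq_mul_div,
    le_div_iff₀' hc']
  exact (mul_le_mul_of_nonneg_right hx (norm_nonneg _)).trans
    (norm_mul_norm_inv_norm_smul_sub_le x y hy0)

end Normalization

section GramSchmidt

variable {𝕜 E : Type*} [RCLike 𝕜] [NormedAddCommGroup E] [InnerProductSpace 𝕜 E]

lemma norm_inner_smul_self_sub_le {u v : E} (hu : ‖u‖ ≤ 1) (hv : ‖v‖ ≤ 1) (x y : E) :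
    ‖⟪u, x⟫_𝕜 • u - ⟪v, y⟫_𝕜 • v‖ ≤ 2 * ‖x‖ * ‖u - v‖ + ‖x - y‖ := by
  have hsplit : ⟪u, x⟫_𝕜 • u - ⟪v, y⟫_𝕜 • v
      = ⟪u - v, x⟫_𝕜 • u + ⟪v, x⟫_𝕜 • (u - v) + ⟪v, x - y⟫_𝕜 • v := by
    rw [inner_sub_left, inner_sub_right]
    module
  calc ‖⟪u, x⟫_𝕜 • u - ⟪v, y⟫_𝕜 • v‖
      ≤ ‖u - v‖ * ‖x‖ * ‖u‖ + ‖v‖ * ‖x‖ * ‖u - v‖ + ‖v‖ * ‖x - y‖ * ‖v‖ := by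
        rw [hsplit]
        grw [norm_add₃_le, norm_smul, norm_smul, norm_smul, norm_inner_le_norm, norm_inner_le_norm,
          norm_inner_le_norm]
    _ ≤ ‖u - v‖ * ‖x‖ * 1 + 1 * ‖x‖ * ‖u - v‖ + 1 * ‖x - y‖ * 1 := by gcongr
    _ = 2 * ‖x‖ * ‖u - v‖ + ‖x - y‖ := by ring

lemma one_le_norm_sub_of_mem_span_image {ι : Type*} {e : ι → E} (he : Orthonormal 𝕜 e)
    {s : Set ι} {k : ι} (hk : k ∉ s) {z : E} (hz : z ∈ Submodule.span 𝕜 (e '' s)) :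
    1 ≤ ‖e k - z‖ := by
  have hz_orth : ⟪e k, z⟫_𝕜 = 0 := by
    have hle : Submodule.span 𝕜 (e '' s) ≤ (𝕜 ∙ e k)ᗮ := by
      rw [Submodule.span_le]
      rintro _ ⟨i, hi, rfl⟩
      exact Submodule.mem_orthogonal_singleton_iff_inner_right.2
        (he.inner_eq_zero (ne_of_mem_of_not_mem hi hk).symm)
    exact Submodule.mem_orthogonal_singleton_iff_inner_right.1 (hle hz)
  calc 1 = ‖⟪e k, e k - z⟫_𝕜‖ := by
        rw [inner_sub_right, hz_orth, sub_zero, inner_self_eq_norm_sq_to_K, he.norm_eq_one]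
        simp
    _ ≤ ‖e k‖ * ‖e k - z‖ := norm_inner_le_norm _ _
    _ = ‖e k - z‖ := by rw [he.norm_eq_one, one_mul]

variable {ι : Type*} [LinearOrder ι] [LocallyFiniteOrderBot ι]

section WellFounded

variable [WellFoundedLT ι]

lemma norm_gramSchmidtNormed_le_one (f : ι → E) (k : ι) : ‖gramSchmidtNormed 𝕜 f k‖ ≤ 1 := by
  by_cases h : gramSchmidtNormed 𝕜 f k = 0
  · simp [h]
  · exact (gramSchmidtNormed_unit_length' h).le

lemma starProjection_span_singleton_gramSchmidt (f : ι → E) (k : ι) (x : E) :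
    (𝕜 ∙ gramSchmidt 𝕜 f k).starProjection x
      = ⟪gramSchmidtNormed 𝕜 f k, x⟫_𝕜 • gramSchmidtNormed 𝕜 f k := by
  rw [Submodule.starProjection_singleton, gramSchmidtNormed, inner_smul_left, smul_smul]
  congr 1
  simp only [map_inv₀, RCLike.conj_ofReal, RCLike.ofReal_pow]
  ring

lemma gramSchmidt_eq_sub_sum_inner_gramSchmidtNormed (f : ι → E) (k : ι) :
    gramSchmidt 𝕜 f k = f k - ∑ i ∈ Finset.Iio k,
      ⟪gramSchmidtNormed 𝕜 f i, f k⟫_𝕜 • gramSchmidtNormed 𝕜 f i := by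
  rw [gramSchmidt_def]
  simp only [starProjection_span_singleton_gramSchmidt]

lemma sub_gramSchmidt_mem_span_image_Iio (f : ι → E) (k : ι) :
    f k - gramSchmidt 𝕜 f k ∈ Submodule.span 𝕜 (f '' Set.Iio k) := by
  rw [gramSchmidt_eq_sub_sum_inner_gramSchmidtNormed, sub_sub_cancel, ← span_gramSchmidt_Iio,
    ← span_gramSchmidtNormed]
  exact Submodule.sum_mem _ fun i hi ↦ Submodule.smul_mem _ _
    (Submodule.subset_span ⟨i, Finset.mem_Iio.1 hi, rfl⟩)

lemma le_norm_gramSchmidt_of_orthonormal {F : Type*} [NormedAddCommGroup F]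
    [InnerProductSpace 𝕜 F] {e : ι → E} (he : Orthonormal 𝕜 e) {T : E →ₗ[𝕜] F} {c : ℝ}
    (hc : 0 ≤ c) (hT : ∀ x, c * ‖x‖ ≤ ‖T x‖) (k : ι) : c ≤ ‖gramSchmidt 𝕜 (T ∘ e) k‖ := by
  obtain ⟨z, hz, hTz⟩ : ∃ z ∈ Submodule.span 𝕜 (e '' Set.Iio k),
      T z = (T ∘ e) k - gramSchmidt 𝕜 (T ∘ e) k := by
    rw [← Submodule.mem_map, Submodule.map_span, ← Set.image_comp]
    exact sub_gramSchmidt_mem_span_image_Iio _ k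
  calc c ≤ c * ‖e k - z‖ :=
        le_mul_of_one_le_right hc (one_le_norm_sub_of_mem_span_image he Set.self_notMem_Iio hz)
    _ ≤ ‖T (e k - z)‖ := hT _
    _ = ‖gramSchmidt 𝕜 (T ∘ e) k‖ := by rw [map_sub, hTz, Function.comp_apply, sub_sub_cancel]

end WellFounded

variable [Fintype ι] {M c : ℝ≥0}

lemma lipschitzOnWith_gramSchmidt_of_forall_lt {S : Set (ι → E)} {k : ι} {K : ι → ℝ≥0}
    (hM : ∀ f ∈ S, ‖f k‖ ≤ M)
    (hK : ∀ i < k, LipschitzOnWith (K i) (fun f ↦ gramSchmidtNormed 𝕜 f i) S) :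
    LipschitzOnWith (1 + ∑ i ∈ Finset.Iio k, (2 * M * K i + 1)) (fun f ↦ gramSchmidt 𝕜 f k) S := by
  refine LipschitzOnWith.of_dist_le_mul fun f hf g hg ↦ ?_
  have hfg : ‖f k - g k‖ ≤ dist f g := by
    rw [← dist_eq_norm]
    exact dist_le_pi_dist f g k
  have hterm : ∀ i ∈ Finset.Iio k,
      ‖⟪gramSchmidtNormed 𝕜 f i, f k⟫_𝕜 • gramSchmidtNormed 𝕜 f i
        - ⟪gramSchmidtNormed 𝕜 g i, g k⟫_𝕜 • gramSchmidtNormed 𝕜 g i‖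
        ≤ (2 * M * K i + 1) * dist f g := fun i hi ↦ by
    have hi_lip := (hK i (Finset.mem_Iio.1 hi)).dist_le_mul f hf g hg
    rw [dist_eq_norm] at hi_lip
    grw [norm_inner_smul_self_sub_le (norm_gramSchmidtNormed_le_one f i)
      (norm_gramSchmidtNormed_le_one g i), hi_lip, hfg, hM f hf]
    exact le_of_eq (by ring)
  rw [dist_eq_norm, gramSchmidt_eq_sub_sum_inner_gramSchmidtNormed f,
    gramSchmidt_eq_sub_sum_inner_gramSchmidtNormed g, sub_sub_sub_comm, ← Finset.sum_sub_distrib]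
  push_cast
  rw [add_mul, one_mul, Finset.sum_mul]
  exact (norm_sub_le _ _).trans (add_le_add hfg (norm_sum_le_of_le _ hterm))

lemma exists_lipschitzOnWith_gramSchmidtNormed_apply (hc : 0 < c) (k : ι) :
    ∃ K : ℝ≥0, LipschitzOnWith K (fun f : ι → E ↦ gramSchmidtNormed 𝕜 f k)
      {f | ∀ i, ‖f i‖ ≤ M ∧ c ≤ ‖gramSchmidt 𝕜 f i‖} := by
  induction k using WellFoundedLT.induction with
  | ind k ih =>
    choose! K hK using ih
    exact ⟨_, (lipschitzOnWith_inv_norm_smul hc).comp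
      (lipschitzOnWith_gramSchmidt_of_forall_lt (fun f hf ↦ (hf k).1) hK) fun f hf ↦ (hf k).2⟩

lemma exists_lipschitzOnWith_gramSchmidtNormed (hc : 0 < c) :
    ∃ K : ℝ≥0, LipschitzOnWith K (gramSchmidtNormed 𝕜 : (ι → E) → ι → E)
      {f | ∀ i, ‖f i‖ ≤ M ∧ c ≤ ‖gramSchmidt 𝕜 f i‖} := by
  choose K hK using exists_lipschitzOnWith_gramSchmidtNormed_apply (𝕜 := 𝕜) (E := E) (ι := ι)
    (M := M) hc
  refine ⟨∑ k, K k, LipschitzOnWith.of_dist_le_mul fun f hf g hg ↦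
    (dist_pi_le_iff (by positivity)).2 fun k ↦ ?_⟩
  grw [(hK k).dist_le_mul f hf g hg,
    Finset.single_le_sum (f := K) (fun _ _ ↦ zero_le) (Finset.mem_univ k)]

end GramSchmidt

section ProjectedFrame

variable {𝕜 E : Type*} [RCLike 𝕜] [NormedAddCommGroup E] [InnerProductSpace 𝕜 E]
  {W₀ W : Submodule 𝕜 E} [W.HasOrthogonalProjection]

lemma one_sub_mul_norm_le_norm_starProjection [W₀.HasOrthogonalProjection] {r : ℝ}
    (hW : ‖W.starProjection - W₀.starProjection‖ ≤ r) (x : W₀) :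
    (1 - r) * ‖x‖ ≤ ‖W.starProjection x‖ := by
  have hdiff : ‖(x : E) - W.starProjection x‖ ≤ r * ‖x‖ :=
    calc ‖(x : E) - W.starProjection x‖
        = ‖(W.starProjection - W₀.starProjection) x‖ := by
          rw [sub_apply, Submodule.starProjection_eq_self_iff.2 x.2, norm_sub_rev]
      _ ≤ r * ‖x‖ := (W.starProjection - W₀.starProjection).le_of_opNorm_le hW x
  linarith [norm_sub_norm_le (x : E) (W.starProjection x), Submodule.coe_norm x]

lemma injective_starProjection_comp_subtype [W₀.HasOrthogonalProjection]
    (hW : ‖W.starProjection - W₀.starProjection‖ < 1) :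
    Function.Injective (W.starProjection.toLinearMap ∘ₗ W₀.subtype) := by
  rw [injective_iff_map_eq_zero]
  intro x hx
  have hbound := one_sub_mul_norm_le_norm_starProjection (W := W) le_rfl x
  rw [show W.starProjection x = 0 from hx, norm_zero] at hbound
  exact norm_le_zero_iff.1 (nonpos_of_mul_nonpos_right hbound (sub_pos.2 hW))

variable [FiniteDimensional 𝕜 W₀]

lemma finiteDimensional_and_finrank_le_of_norm_starProjection_sub_lt_one
    (hW : ‖W.starProjection - W₀.starProjection‖ < 1) :
    FiniteDimensional 𝕜 W ∧ finrank 𝕜 W ≤ finrank 𝕜 W₀ := by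
  have hinj : Function.Injective (W₀.orthogonalProjectionOnto.toLinearMap ∘ₗ W.subtype) :=
    .of_comp (f := W₀.subtype)
      (injective_starProjection_comp_subtype (norm_sub_rev W.starProjection _ ▸ hW))
  exact ⟨.of_injective _ hinj, LinearMap.finrank_le_finrank_of_injective hinj⟩

variable {ι : Type*} [LinearOrder ι] [LocallyFiniteOrderBot ι] [Fintype ι]

lemma one_sub_le_norm_gramSchmidt_starProjection (b : OrthonormalBasis ι 𝕜 W₀) {r : ℝ} (hr : r ≤ 1)
    (hW : ‖W.starProjection - W₀.starProjection‖ ≤ r) (i : ι) :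
    1 - r ≤ ‖gramSchmidt 𝕜 (fun i ↦ W.starProjection (b i)) i‖ :=
  le_norm_gramSchmidt_of_orthonormal (T := W.starProjection.toLinearMap ∘ₗ W₀.subtype)
    b.orthonormal (sub_nonneg.2 hr) (one_sub_mul_norm_le_norm_starProjection hW) i

/-- The Gram–Schmidt orthonormalization of the orthogonal projection to `W` of an orthonormal basis
of `W₀`. It frames every `W` whose projection is at distance less than `1` from that of `W₀`. -/
def projectedFrame (b : OrthonormalBasis ι 𝕜 W₀) (W : Submodule 𝕜 E) [W.HasOrthogonalProjection] :
    ι → E :=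
  gramSchmidtNormed 𝕜 fun i ↦ W.starProjection (b i)

lemma orthonormal_projectedFrame (b : OrthonormalBasis ι 𝕜 W₀)
    (hW : ‖W.starProjection - W₀.starProjection‖ < 1) : Orthonormal 𝕜 (projectedFrame b W) :=
  gramSchmidtNormed_orthonormal (b.orthonormal.linearIndependent.map'
    (W.starProjection.toLinearMap ∘ₗ W₀.subtype)
    (LinearMap.ker_eq_bot.2 (injective_starProjection_comp_subtype hW)))

lemma span_range_projectedFrame (b : OrthonormalBasis ι 𝕜 W₀)
    (hW : ‖W.starProjection - W₀.starProjection‖ < 1) :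
    Submodule.span 𝕜 (Set.range (projectedFrame b W)) = W := by
  obtain ⟨_, hfinrank⟩ := finiteDimensional_and_finrank_le_of_norm_starProjection_sub_lt_one hW
  refine Submodule.eq_of_le_of_finrank_le ?_ ?_
  · rw [projectedFrame, span_gramSchmidtNormed_range, span_gramSchmidt, Submodule.span_le]
    rintro _ ⟨i, rfl⟩
    exact W.starProjection_apply_mem (b i)
  · rwa [finrank_span_eq_card (orthonormal_projectedFrame b hW).linearIndependent,
      ← finrank_eq_card_basis b.toBasis]

lemma exists_dist_projectedFrame_le (b : OrthonormalBasis ι 𝕜 W₀) {r : ℝ} (hr : r < 1) :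
    ∃ K : ℝ≥0, ∀ (W W' : Submodule 𝕜 E) [W.HasOrthogonalProjection] [W'.HasOrthogonalProjection],
      ‖W.starProjection - W₀.starProjection‖ ≤ r → ‖W'.starProjection - W₀.starProjection‖ ≤ r →
        dist (projectedFrame b W) (projectedFrame b W')
          ≤ K * ‖W.starProjection - W'.starProjection‖ := by
  lift 1 - r to ℝ≥0 using (sub_pos.2 hr).le with c hc
  obtain ⟨K, hK⟩ := exists_lipschitzOnWith_gramSchmidtNormed (𝕜 := 𝕜) (E := E) (ι := ι) (M := 1)
    (c := c) (by rw [← NNReal.coe_pos, hc]; exact sub_pos.2 hr)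
  have hmem (W : Submodule 𝕜 E) [W.HasOrthogonalProjection]
      (hW : ‖W.starProjection - W₀.starProjection‖ ≤ r) (i : ι) :
      ‖W.starProjection (b i)‖ ≤ (1 : ℝ≥0) ∧
        c ≤ ‖gramSchmidt 𝕜 (fun i ↦ W.starProjection (b i)) i‖ :=
    ⟨(W.norm_starProjection_apply_le _).trans_eq (b.orthonormal.norm_eq_one i),
      hc ▸ one_sub_le_norm_gramSchmidt_starProjection b hr.le hW i⟩
  refine ⟨K, fun W W' _ _ hW hW' ↦ (hK.dist_le_mul _ (hmem W hW) _ (hmem W' hW')).trans ?_⟩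
  gcongr
  refine (dist_pi_le_iff (norm_nonneg _)).2 fun i ↦ ?_
  rw [dist_eq_norm, ← sub_apply]
  exact (W.starProjection - W'.starProjection).unit_le_opNorm _ (b.orthonormal.norm_eq_one i).le

end ProjectedFrame

section Framing

variable {𝕜 E α : Type*} [RCLike 𝕜] [NormedAddCommGroup E] [InnerProductSpace 𝕜 E]

lemma norm_starProjection_sub_le_diam (W : α → Submodule 𝕜 E) [∀ a, (W a).HasOrthogonalProjection]
    {s : Set α} {a a' : α} (ha : a ∈ s) (ha' : a' ∈ s) :
    ‖(W a).starProjection - (W a').starProjection‖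
      ≤ diam ((fun a ↦ (W a).starProjection) '' s) := by
  rw [← dist_eq_norm]
  refine dist_le_diam_of_mem (isBounded_closedBall (x := 0) (r := 1) |>.subset ?_)
    (Set.mem_image_of_mem _ ha) (Set.mem_image_of_mem _ ha')
  rintro _ ⟨a, -, rfl⟩
  exact mem_closedBall_zero_iff.2 (W a).starProjection_norm_le

theorem lipschitz_orthonormal_framing_general {m : ℕ} (W₀ : Submodule 𝕜 E) [FiniteDimensional 𝕜 W₀]
    (hm : finrank 𝕜 W₀ = m) (W : α → Submodule 𝕜 E) [∀ a, (W a).HasOrthogonalProjection]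
    {s : Set α} {r : ℝ} (hr : r < 1)
    (hW : ∀ a ∈ s, ‖(W a).starProjection - W₀.starProjection‖ ≤ r) :
    ∃ (Ξ : α → Fin m → E) (K : ℝ≥0),
      (∀ a ∈ s, Orthonormal 𝕜 (Ξ a)) ∧
      (∀ a ∈ s, Submodule.span 𝕜 (Set.range (Ξ a)) = W a) ∧
      (∀ a ∈ s, ∀ a' ∈ s,
        dist (Ξ a) (Ξ a') ≤ K * ‖(W a).starProjection - (W a').starProjection‖) := by
  let b : OrthonormalBasis (Fin m) 𝕜 W₀ := (stdOrthonormalBasis 𝕜 W₀).reindex (finCongr hm)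
  obtain ⟨K, hK⟩ := exists_dist_projectedFrame_le b hr
  exact ⟨fun a ↦ projectedFrame b (W a), K,
    fun a ha ↦ orthonormal_projectedFrame b ((hW a ha).trans_lt hr),
    fun a ha ↦ span_range_projectedFrame b ((hW a ha).trans_lt hr),
    fun a ha a' ha' ↦ hK (W a) (W a') (hW a ha) (hW a' ha')⟩

end Framing

/-- A nonempty closed subset `𝒱` of the Grassmannian `G(n,m)` (metrized by
the operator norm distance of orthogonal projections) with `diam 𝒱 < 1` admits a Lipschitzian
orthonormal framing `Ξ : 𝒱 → V(n,m)` with `span{Ξ₁(W),…,Ξ_m(W)} = W` for all `W ∈ 𝒱`. -/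
theorem lipschitz_orthonormal_framing
    (n m : ℕ) (hm : 1 ≤ m) (hmn : m + 1 ≤ n)
    (𝒱 : Set (Submodule ℝ (En n))) (hne : 𝒱.Nonempty)
    (hrank : ∀ W ∈ 𝒱, Module.finrank ℝ W = m)
    (hclosed : IsClosed ((fun W => projCLM W) '' 𝒱))
    (hdiam : Metric.diam ((fun W => projCLM W) '' 𝒱) < 1) :
    ∃ (Ξ : Submodule ℝ (En n) → (Fin m → En n)) (K : ℝ≥0),
      (∀ W ∈ 𝒱, Orthonormal ℝ (Ξ W)) ∧
      (∀ W ∈ 𝒱, Submodule.span ℝ (Set.range (Ξ W)) = W) ∧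
      (∀ W ∈ 𝒱, ∀ W' ∈ 𝒱, dist (Ξ W) (Ξ W') ≤ K * ‖projCLM W - projCLM W'‖) := by
  obtain ⟨W₀, hW₀⟩ := hne
  exact lipschitz_orthonormal_framing_general W₀ (hrank W₀ hW₀) (fun W ↦ W) hdiam
    fun W hW ↦ norm_starProjection_sub_le_diam (fun W ↦ W) hW hW₀
end
end
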